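/- arXiv:1007.1697 — 9 statements merged into one kernel-verified Lean document; each statement's English description precedes it below -/
import Mathlib

section
/- Let p be a prime and n a positive integer coprime to p. A linear subspace S of F_p^n × F_p^n is separately cyclic if and only if there exist polynomials g(X), f(X), h(X) in F_p[X] such that g(X) and h(X) divide X^n − 1 in F_p[X], and S, viewed as a set of pairs of polynomials in R × R for R = F_p[X]/(X^n−1), is exactly the set of pairs (a(X)g(X), a(X)f(X) + b(X)h(X)) where a(X) and b(X) range over all polynomials in F_p[X]. -/
open Polynomial

/-- The right cyclic shift `N` on `F_p^n`. -/
def shiftN {p n : ℕ} [NeZero n] (u : Fin n → ZMod p) : Fin n → ZMod p :=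
  fun i => u (i - 1)

/-- The polynomial `u(X) = u_0 + u_1 X + … + u_{n−1} X^{n−1}` associated with a
vector `u ∈ F_p^n`. -/
noncomputable def vecPoly {p n : ℕ} (u : Fin n → ZMod p) : Polynomial (ZMod p) :=
  ∑ i : Fin n, Polynomial.monomial (i : ℕ) (u i)

/-- The image of the vector `u ∈ F_p^n` in the ring `R = F_p[X]/(X^n − 1)`. -/
noncomputable def toR (p n : ℕ) (u : Fin n → ZMod p) :
    Polynomial (ZMod p) ⧸ Ideal.span {(X : Polynomial (ZMod p)) ^ n - 1} :=
  Ideal.Quotient.mk _ (vecPoly u)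

/-!
Multiplication by `X` on `R = F_p[X]/(X^n - 1)` is the cyclic shift, so the separately cyclic
subspaces are the `F_p[X]`-submodules `M` of `R × R`. Since `F_p[X]` is a principal ideal ring, the
projection of `M` to the first factor is generated by some `g ∣ X^n - 1`, and the part of `M` inside
`0 × R` by some `(0, h)` with `h ∣ X^n - 1`; together with any lift `(g, f) ∈ M` of `g`, the element
`(0, h)` generates `M`.
-/

section Module

variable {A M N : Type*} [Ring A] [AddCommGroup M] [Module A M] [AddCommGroup N] [Module A N]

theorem eq_span_pair_of_map_fst_le_of_comap_inr_eq {S : Submodule A (M × N)} {g : M} {f h : N}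
    (hgf : (g, f) ∈ S) (hg : S.map (LinearMap.fst A M N) ≤ Submodule.span A {g})
    (hh : S.comap (LinearMap.inr A M N) = Submodule.span A {h}) :
    S = Submodule.span A {(g, f), (0, h)} := by
  have h_mem : (0, h) ∈ S := by
    change h ∈ S.comap (LinearMap.inr A M N)
    exact hh ▸ Submodule.mem_span_singleton_self h
  refine le_antisymm ?_ (Submodule.span_le.2 ?_)
  · rintro ⟨x, y⟩ hxy
    obtain ⟨a, rfl⟩ : ∃ a : A, a • g = x :=
      Submodule.mem_span_singleton.1 (hg (Submodule.mem_map_of_mem hxy))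
    have remainder_mem : y - a • f ∈ S.comap (LinearMap.inr A M N) := by
      simpa using S.sub_mem hxy (S.smul_mem a hgf)
    obtain ⟨b, hb⟩ := Submodule.mem_span_singleton.1 (hh ▸ remainder_mem)
    exact Submodule.mem_span_pair.2 ⟨a, b, by simp [hb]⟩
  · rintro _ (rfl | rfl)
    exacts [hgf, h_mem]

end Module

section PrincipalIdealRing

variable {A : Type*} [CommRing A] [IsPrincipalIdealRing A]

theorem exists_dvd_eq_span_mk (q : A) (M : Submodule A (A ⧸ Ideal.span {q})) :
    ∃ g, g ∣ q ∧ M = Submodule.span A {Ideal.Quotient.mk (Ideal.span {q}) g} := by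
  let π := (Ideal.span {q}).mkQ
  obtain ⟨g, hg⟩ := (IsPrincipalIdealRing.principal (M.comap π)).principal
  have hq : q ∈ M.comap π := by simp [π]
  rw [hg] at hq
  refine ⟨g, Ideal.mem_span_singleton.1 hq, ?_⟩
  rw [← Submodule.map_comap_eq_of_surjective (Submodule.mkQ_surjective _) M, hg,
    Submodule.map_span, Set.image_singleton]
  rfl

theorem exists_dvd_eq_span_pair_mk (q r : A)
    (M : Submodule A ((A ⧸ Ideal.span {q}) × (A ⧸ Ideal.span {r}))) :
    ∃ g f h : A, g ∣ q ∧ h ∣ r ∧ M = Submodule.span A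
      {(Ideal.Quotient.mk _ g, Ideal.Quotient.mk _ f), (0, Ideal.Quotient.mk _ h)} := by
  obtain ⟨g, hgq, hg⟩ := exists_dvd_eq_span_mk q (M.map (LinearMap.fst A _ _))
  obtain ⟨h, hhr, hh⟩ := exists_dvd_eq_span_mk r (M.comap (LinearMap.inr A _ _))
  obtain ⟨⟨_, y⟩, hgf, rfl⟩ := hg ▸ Submodule.mem_span_singleton_self (Ideal.Quotient.mk _ g)
  obtain ⟨f, rfl⟩ := Ideal.Quotient.mk_surjective y
  exact ⟨g, f, h, hgq, hhr, eq_span_pair_of_map_fst_le_of_comap_inr_eq hgf hg.le hh⟩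

end PrincipalIdealRing

theorem exists_restrictScalars_eq_of_X_smul_mem {K V : Type*} [CommSemiring K] [AddCommMonoid V]
    [Module K V] [Module K[X] V] [IsScalarTower K K[X] V] (S : Submodule K V)
    (hS : ∀ v ∈ S, (X : K[X]) • v ∈ S) :
    ∃ M : Submodule K[X] V, M.restrictScalars K = S :=
  ⟨{ S with
      smul_mem' := fun P v hv => by
        simpa using aeval_apply_smul_mem_of_le_comap' hv P X hS }, rfl⟩

theorem eq_of_mk_eq_mk_of_degree_lt {K : Type*} [CommRing K] {q P Q : K[X]} (hq : q.Monic)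
    (hP : P.degree < q.degree) (hQ : Q.degree < q.degree)
    (h : Ideal.Quotient.mk (Ideal.span {q}) P = Ideal.Quotient.mk (Ideal.span {q}) Q) :
    P = Q := by
  nontriviality K
  rw [← (modByMonic_eq_self_iff hq).2 hP, ← (modByMonic_eq_self_iff hq).2 hQ]
  exact modByMonic_eq_of_dvd_sub hq (Ideal.mem_span_singleton.1 (Ideal.Quotient.eq.1 h))

theorem mem_span_pair_mk_iff {A : Type*} [CommRing A] {I J : Ideal A} {g f h : A}
    {x : A ⧸ I} {y : A ⧸ J} :
    (x, y) ∈ Submodule.span A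
        {(Ideal.Quotient.mk I g, Ideal.Quotient.mk J f), (0, Ideal.Quotient.mk J h)} ↔
      ∃ a b : A, x = Ideal.Quotient.mk I (a * g) ∧ y = Ideal.Quotient.mk J (a * f + b * h) := by
  simp [Submodule.mem_span_pair, Algebra.smul_def, eq_comm]

section CyclicShift

variable {p n : ℕ}

/-- The map `toR` from vectors to `R = F_p[X]/(X^n - 1)` as a linear map, factored through the
polynomials of degree less than `n`. -/
noncomputable def toRLinear (p n : ℕ) : (Fin n → ZMod p) →ₗ[ZMod p]
    (ZMod p)[X] ⧸ Ideal.span {(X : (ZMod p)[X]) ^ n - 1} :=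
  (Ideal.Quotient.mkₐ (ZMod p) _).toLinearMap ∘ₗ (degreeLT (ZMod p) n).subtype ∘ₗ
    (degreeLTEquiv (ZMod p) n).symm.toLinearMap

theorem coe_toRLinear : ⇑(toRLinear p n) = toR p n := rfl

theorem toR_injective [NeZero n] : Function.Injective (toR p n) := by
  nontriviality ZMod p
  intro u v huv
  have degree_lt (w : Fin n → ZMod p) :
      (vecPoly w).degree < ((X : (ZMod p)[X]) ^ n - 1).degree := by
    rw [← C_1, degree_X_pow_sub_C (NeZero.pos n)]
    exact mem_degreeLT.1 ((degreeLTEquiv (ZMod p) n).symm w).2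
  have vecPoly_eq : vecPoly u = vecPoly v :=
    eq_of_mk_eq_mk_of_degree_lt (monic_X_pow_sub_C 1 (NeZero.ne n)) (degree_lt u) (degree_lt v) huv
  exact (degreeLTEquiv (ZMod p) n).symm.injective (Subtype.ext vecPoly_eq)

theorem toR_eq_sum (u : Fin n → ZMod p) :
    toR p n u = ∑ i : Fin n, u i • Ideal.Quotient.mk _ X ^ (i : ℕ) := by
  simp only [toR, vecPoly, map_sum, ← smul_X_eq_monomial, ← map_pow]
  rfl

theorem mk_X_pow_eq_one (K : Type*) [CommRing K] (n : ℕ) :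
    Ideal.Quotient.mk (Ideal.span {(X : K[X]) ^ n - 1}) X ^ n = 1 := by
  rw [← map_pow, ← map_one (Ideal.Quotient.mk _), Ideal.Quotient.eq]
  exact Ideal.mem_span_singleton_self _

theorem pow_val_add_one_of_pow_eq_one {G : Type*} [Monoid G] [NeZero n] {x : G}
    (hx : x ^ n = 1) (i : Fin n) :
    x ^ ((i + 1 : Fin n) : ℕ) = x * x ^ (i : ℕ) := by
  rw [Fin.val_add, Fin.val_one', Nat.add_mod_mod, ← pow_eq_pow_mod _ hx, pow_succ']

theorem toR_shiftN [NeZero n] (u : Fin n → ZMod p) :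
    toR p n (shiftN u) = (X : (ZMod p)[X]) • toR p n u := by
  rw [toR_eq_sum, toR_eq_sum, Finset.smul_sum, ← Equiv.sum_comp (Equiv.addRight (1 : Fin n))]
  refine Finset.sum_congr rfl fun i _ => ?_
  rw [smul_comm]
  simp only [Equiv.coe_addRight, shiftN, add_sub_cancel_right,
    pow_val_add_one_of_pow_eq_one (mk_X_pow_eq_one (ZMod p) n)]
  rfl

theorem forall_shiftN_mem_iff_exists_submodule [NeZero n]
    (S : Submodule (ZMod p) ((Fin n → ZMod p) × (Fin n → ZMod p))) :
    (∀ u ∈ S, (shiftN u.1, shiftN u.2) ∈ S) ↔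
      ∃ M : Submodule (ZMod p)[X] (((ZMod p)[X] ⧸ Ideal.span {(X : (ZMod p)[X]) ^ n - 1}) ×
          ((ZMod p)[X] ⧸ Ideal.span {(X : (ZMod p)[X]) ^ n - 1})),
        ∀ u, u ∈ S ↔ (toR p n u.1, toR p n u.2) ∈ M := by
  constructor
  · intro hS
    let φ := (toRLinear p n).prodMap (toRLinear p n)
    have φ_injective : Function.Injective φ := by
      rw [LinearMap.coe_prodMap, coe_toRLinear]
      exact toR_injective.prodMap toR_injective
    obtain ⟨M, hM⟩ := exists_restrictScalars_eq_of_X_smul_mem (S.map φ) <| by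
      rintro _ ⟨u, hu, rfl⟩
      exact ⟨_, hS u hu, Prod.ext (toR_shiftN u.1) (toR_shiftN u.2)⟩
    refine ⟨M, fun u => ?_⟩
    rw [← Submodule.restrictScalars_mem (ZMod p) M, hM]
    exact (φ_injective.mem_set_image (s := S)).symm
  · rintro ⟨M, hM⟩ u hu
    rw [hM, toR_shiftN, toR_shiftN]
    exact M.smul_mem X ((hM u).1 hu)

end CyclicShift

theorem stmt_3_general (p n : ℕ) [Fact p.Prime] [NeZero n]
    (S : Submodule (ZMod p) ((Fin n → ZMod p) × (Fin n → ZMod p))) :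
    (∀ ab : (Fin n → ZMod p) × (Fin n → ZMod p), ab ∈ S →
        (shiftN ab.1, shiftN ab.2) ∈ S) ↔
      ∃ g f h : Polynomial (ZMod p),
        g ∣ X ^ n - 1 ∧ h ∣ X ^ n - 1 ∧
        ∀ ab : (Fin n → ZMod p) × (Fin n → ZMod p),
          ab ∈ S ↔ ∃ a b : Polynomial (ZMod p),
            toR p n ab.1 = Ideal.Quotient.mk _ (a * g) ∧
            toR p n ab.2 = Ideal.Quotient.mk _ (a * f + b * h) := by
  rw [forall_shiftN_mem_iff_exists_submodule]
  constructor
  · rintro ⟨M, hM⟩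
    obtain ⟨g, f, h, hg, hh, rfl⟩ := exists_dvd_eq_span_pair_mk _ _ M
    exact ⟨g, f, h, hg, hh, fun ab => (hM ab).trans mem_span_pair_mk_iff⟩
  · rintro ⟨g, f, h, -, -, hS⟩
    exact ⟨_, fun ab => (hS ab).trans mem_span_pair_mk_iff.symm⟩

/-- Let `p` be a prime and `n` a positive integer coprime to `p`.
A linear subspace `S ⊆ F_p^n × F_p^n` is separately cyclic iff there exist
polynomials `g, f, h ∈ F_p[X]` with `g ∣ X^n − 1` and `h ∣ X^n − 1` such that
the elements of `S`, viewed in `R × R` for `R = F_p[X]/(X^n−1)`, are exactly the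
pairs `(a g, a f + b h)` where `a, b` range over `F_p[X]`. -/
theorem stmt_3 (p n : ℕ) [Fact p.Prime] [NeZero n] (hco : Nat.Coprime n p)
    (S : Submodule (ZMod p) ((Fin n → ZMod p) × (Fin n → ZMod p))) :
    (∀ ab : (Fin n → ZMod p) × (Fin n → ZMod p), ab ∈ S →
        (shiftN ab.1, shiftN ab.2) ∈ S) ↔
      ∃ g f h : Polynomial (ZMod p),
        g ∣ X ^ n - 1 ∧ h ∣ X ^ n - 1 ∧
        ∀ ab : (Fin n → ZMod p) × (Fin n → ZMod p),
          ab ∈ S ↔ ∃ a b : Polynomial (ZMod p),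
            toR p n ab.1 = Ideal.Quotient.mk _ (a * g) ∧
            toR p n ab.2 = Ideal.Quotient.mk _ (a * f + b * h) :=
  stmt_3_general p n S
end

section
/- Let p be a prime, n a positive integer, and S a separately cyclic linear subspace of F_p^n × F_p^n. An element (u,v) of F_p^n × F_p^n has zero symplectic inner product with every element of S if and only if for every (a,b) ∈ S the identity a(X)v(X^{−1}) = b(X)u(X^{−1}) holds in R = F_p[X]/(X^n−1), i.e., (a,b) and (u,v) are isotropic pairs of polynomials modulo X^n − 1. -/
open Polynomial

/-- The symplectic inner product of `(a,b)` and `(c,d)`, namely `aᵀd − bᵀc`. -/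
def sympInner {p n : ℕ} (u v : (Fin n → ZMod p) × (Fin n → ZMod p)) : ZMod p :=
  (∑ i, u.1 i * v.2 i) - (∑ i, u.2 i * v.1 i)

/-- The canonical projection `F_p[X] → R = F_p[X]/(X^n − 1)`. -/
noncomputable def mkR (p n : ℕ) (q : Polynomial (ZMod p)) :
    Polynomial (ZMod p) ⧸ Ideal.span {(X : Polynomial (ZMod p)) ^ n - 1} :=
  Ideal.Quotient.mk _ q

/-! Write `⟨a, v⟩ₖ` for the dot product of `v` with the `k`-th cyclic translate of `a`. Collecting
powers of `X` in `R` gives `a(X) v(X⁻¹) = ∑ₖ ⟨a, v⟩ₖ Xᵏ`, and the classes of `1, X, …, Xⁿ⁻¹` are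
independent in `R`. So `a(X) v(X⁻¹) = b(X) u(X⁻¹)` says that `(u, v)` is symplectically orthogonal
to all `n` simultaneous translates of `(a, b)`, and these lie in `S` as soon as `(a, b)` does. -/

section Translates

lemma translate_nsmul_mem {G α β : Type*} [AddGroup G] {g : G} {S : Set ((G → α) × (G → β))}
    (hS : ∀ ab ∈ S, (fun i ↦ ab.1 (i - g), fun i ↦ ab.2 (i - g)) ∈ S)
    {ab : (G → α) × (G → β)} (hab : ab ∈ S) (m : ℕ) :
    (fun i ↦ ab.1 (i - m • g), fun i ↦ ab.2 (i - m • g)) ∈ S := by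
  induction m with
  | zero => simpa using hab
  | succ m ih => simpa only [succ_nsmul, sub_add_eq_sub_sub_swap] using hS _ ih

open Fin.CommRing in
lemma fin_val_nsmul_one {n : ℕ} [NeZero n] (k : Fin n) : (k : ℕ) • (1 : Fin n) = k := by
  rw [nsmul_one, Fin.cast_val_eq_self]

lemma translate_mem {n : ℕ} [NeZero n] {α β : Type*} {S : Set ((Fin n → α) × (Fin n → β))}
    (hS : ∀ ab ∈ S, (fun i ↦ ab.1 (i - 1), fun i ↦ ab.2 (i - 1)) ∈ S)
    {ab : (Fin n → α) × (Fin n → β)} (hab : ab ∈ S) (k : Fin n) :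
    (fun i ↦ ab.1 (i + k), fun i ↦ ab.2 (i + k)) ∈ S := by
  simpa only [fin_val_nsmul_one, sub_neg_eq_add] using
    translate_nsmul_mem hS hab ((-k : Fin n) : ℕ)

end Translates

section RootsOfUnity

variable {M : Type*} [Monoid M] {n : ℕ} {x : M}

lemma pow_val_add_of_pow_eq_one (hx : x ^ n = 1) (i j : Fin n) :
    x ^ ((i + j : Fin n) : ℕ) = x ^ (i : ℕ) * x ^ (j : ℕ) := by
  rw [Fin.val_add, ← pow_eq_pow_mod _ hx, pow_add]

lemma pow_mul_pow_pred_pow_of_pow_eq_one [NeZero n] (hx : x ^ n = 1) (j : ℕ) :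
    x ^ j * (x ^ (n - 1)) ^ j = 1 := by
  rw [← (Commute.self_pow x _).mul_pow, mul_pow_sub_one (NeZero.ne n), hx, one_pow]

end RootsOfUnity

/-- The periodic cross-correlation of `a` and `v`: its `k`-th entry is the dot product of `v` with
the `k`-th cyclic translate of `a`. These are the coefficients of `a(X) v(X⁻¹)` modulo `Xⁿ - 1`. -/
def cyclicCorrelation {K : Type*} [NonUnitalNonAssocSemiring K] {n : ℕ} (a v : Fin n → K) :
    Fin n → K :=
  fun k ↦ (fun j ↦ a (j + k)) ⬝ᵥ v

section Evaluation

variable {K A : Type*} [CommSemiring K] [DecidableEq K] [Semiring A] [Algebra K A] {n : ℕ}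

lemma aeval_ofFn (x : A) (a : Fin n → K) : aeval x (ofFn n a) = ∑ i, a i • x ^ (i : ℕ) := by
  simp only [ofFn_eq_sum_monomial, map_sum, aeval_monomial, Algebra.smul_def]

lemma aeval_ofFn_mul_aeval_pow_pred_ofFn [NeZero n] {x : A} (hx : x ^ n = 1)
    (a v : Fin n → K) :
    aeval x (ofFn n a) * aeval (x ^ (n - 1)) (ofFn n v) =
      aeval x (ofFn n (cyclicCorrelation a v)) := by
  have pow_cancel (j k : Fin n) :
      x ^ ((j + k : Fin n) : ℕ) * (x ^ (n - 1)) ^ (j : ℕ) = x ^ (k : ℕ) := by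
    rw [add_comm, pow_val_add_of_pow_eq_one hx, mul_assoc,
      pow_mul_pow_pred_pow_of_pow_eq_one hx, mul_one]
  simp only [aeval_ofFn, Finset.sum_mul_sum, smul_mul_smul_comm]
  calc ∑ i, ∑ j, (a i * v j) • (x ^ (i : ℕ) * (x ^ (n - 1)) ^ (j : ℕ))
      = ∑ j, ∑ i, (a i * v j) • (x ^ (i : ℕ) * (x ^ (n - 1)) ^ (j : ℕ)) := Finset.sum_comm
    _ = ∑ j, ∑ k, (a (j + k) * v j) • x ^ (k : ℕ) :=
        Finset.sum_congr rfl fun j _ ↦ by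
          rw [← Equiv.sum_comp (Equiv.addLeft j)]
          simp only [Equiv.coe_addLeft, pow_cancel]
    _ = ∑ k, ∑ j, (a (j + k) * v j) • x ^ (k : ℕ) := Finset.sum_comm
    _ = ∑ k, cyclicCorrelation a v k • x ^ (k : ℕ) := by
        simp only [cyclicCorrelation, dotProduct, Finset.sum_smul]

end Evaluation

section Quotient

variable {K : Type*} [CommRing K]

lemma adjoinRoot_mk_inj_of_degree_lt {f g h : K[X]} (hf : f.Monic) (hg : g.degree < f.degree)
    (hh : h.degree < f.degree) : AdjoinRoot.mk f g = AdjoinRoot.mk f h ↔ g = h := by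
  refine ⟨fun hgh ↦ ?_, congrArg _⟩
  by_contra hne
  exact hf.not_dvd_of_degree_lt (sub_ne_zero.mpr hne)
    ((degree_sub_le g h).trans_lt (max_lt hg hh)) (AdjoinRoot.mk_eq_mk.mp hgh)

lemma root_X_pow_sub_one_pow (n : ℕ) : AdjoinRoot.root (X ^ n - 1 : K[X]) ^ n = 1 := by
  rw [← AdjoinRoot.mk_X, ← map_pow, ← map_one (AdjoinRoot.mk _), AdjoinRoot.mk_eq_mk]

variable [DecidableEq K] {n : ℕ} [NeZero n]

lemma adjoinRoot_mk_ofFn_inj {a b : Fin n → K} :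
    AdjoinRoot.mk (X ^ n - 1) (ofFn n a) = AdjoinRoot.mk (X ^ n - 1) (ofFn n b) ↔ a = b := by
  nontriviality K
  have hdeg : (X ^ n - 1 : K[X]).degree = n := degree_X_pow_sub_C (NeZero.pos n) 1
  have hmonic : (X ^ n - 1 : K[X]).Monic := monic_X_pow_sub_C 1 (NeZero.ne n)
  rw [adjoinRoot_mk_inj_of_degree_lt hmonic (hdeg ▸ ofFn_degree_lt a)
    (hdeg ▸ ofFn_degree_lt b), (injective_ofFn n).eq_iff]

lemma adjoinRoot_mk_mul_comp_eq_mk_cyclicCorrelation (a v : Fin n → K) :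
    AdjoinRoot.mk (X ^ n - 1) (ofFn n a * (ofFn n v).comp (X ^ (n - 1))) =
      AdjoinRoot.mk (X ^ n - 1) (ofFn n (cyclicCorrelation a v)) := by
  simp only [← AdjoinRoot.aeval_eq, map_mul, aeval_comp, aeval_X_pow,
    aeval_ofFn_mul_aeval_pow_pred_ofFn (root_X_pow_sub_one_pow n)]

lemma adjoinRoot_mk_mul_comp_eq_iff_forall_translate (a b u v : Fin n → K) :
    AdjoinRoot.mk (X ^ n - 1) (ofFn n a * (ofFn n v).comp (X ^ (n - 1))) =
        AdjoinRoot.mk (X ^ n - 1) (ofFn n b * (ofFn n u).comp (X ^ (n - 1))) ↔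
      ∀ k, u ⬝ᵥ (fun i ↦ b (i + k)) - v ⬝ᵥ (fun i ↦ a (i + k)) = 0 := by
  simp only [adjoinRoot_mk_mul_comp_eq_mk_cyclicCorrelation, adjoinRoot_mk_ofFn_inj, funext_iff,
    cyclicCorrelation, sub_eq_zero, dotProduct_comm u, dotProduct_comm v]
  exact forall_congr' fun _ ↦ eq_comm

end Quotient

lemma vecPoly_eq_ofFn {p n : ℕ} (u : Fin n → ZMod p) : vecPoly u = ofFn n u :=
  (ofFn_eq_sum_monomial u).symm

theorem stmt_5_general {K : Type*} [CommRing K] [DecidableEq K] {n : ℕ} [NeZero n]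
    (S : Set ((Fin n → K) × (Fin n → K)))
    (hcyc : ∀ ab ∈ S, (fun i ↦ ab.1 (i - 1), fun i ↦ ab.2 (i - 1)) ∈ S) (u v : Fin n → K) :
    (∀ ab ∈ S, u ⬝ᵥ ab.2 - v ⬝ᵥ ab.1 = 0) ↔
      ∀ ab ∈ S,
        AdjoinRoot.mk (X ^ n - 1) (ofFn n ab.1 * (ofFn n v).comp (X ^ (n - 1))) =
          AdjoinRoot.mk (X ^ n - 1) (ofFn n ab.2 * (ofFn n u).comp (X ^ (n - 1))) := by
  simp only [adjoinRoot_mk_mul_comp_eq_iff_forall_translate]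
  constructor
  · intro horth ab hab k
    exact horth _ (translate_mem hcyc hab k)
  · intro horth ab hab
    simpa only [add_zero] using horth ab hab 0

/-- Let `S` be a separately cyclic linear subspace of
`F_p^n × F_p^n`.  A pair `(u,v)` has zero symplectic inner product with every
element of `S` iff for every `(a,b) ∈ S` the identity
`a(X)·v(X^{−1}) = b(X)·u(X^{−1})` holds in `R = F_p[X]/(X^n−1)`
(`X^{−1}` being the class of `X^{n−1}`). -/
theorem stmt_5 (p n : ℕ) [Fact p.Prime] [NeZero n]
    (S : Submodule (ZMod p) ((Fin n → ZMod p) × (Fin n → ZMod p)))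
    (hcyc : ∀ ab ∈ S, (shiftN ab.1, shiftN ab.2) ∈ S)
    (u v : Fin n → ZMod p) :
    (∀ ab ∈ S, sympInner (u, v) ab = 0) ↔
      ∀ ab ∈ S,
        mkR p n (vecPoly ab.1 * (vecPoly v).comp (X ^ (n - 1))) =
          mkR p n (vecPoly ab.2 * (vecPoly u).comp (X ^ (n - 1))) := by
  simp only [vecPoly_eq_ofFn]
  -- Definitional unfolding matches `mkR p n` with `AdjoinRoot.mk (X ^ n - 1)`.
  exact stmt_5_general S hcyc u v
end

section
/- Let p be a prime and n a positive integer coprime to p. A linear subspace S of F_p^n × F_p^n is totally isotropic and separately cyclic if and only if there exist polynomials g, f, h in F_p[X] such that: (1) g and h divide X^n − 1 in F_p[X]; (2) g(X^{−1})h(X) = g(X)h(X^{−1}) = 0 in R = F_p[X]/(X^n−1); (3) g(X)f(X^{−1}) = f(X)g(X^{−1}) in R; and (4) S, viewed in R × R, is exactly the set of pairs (a(X)g(X), a(X)f(X) + b(X)h(X)) where a and b range over all polynomials in F_p[X]. -/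
open Polynomial

/-!
The coordinates identify `K ^ n` with `R = K[X] / (X ^ n - 1)`, turning the cyclic shift into
multiplication by `X`; a separately cyclic subspace thus becomes an `R`-submodule of `R × R`. Since
`⟨u, v⟩` is the constant coefficient of `u(X) v(X⁻¹)`, the symplectic form is the constant
coefficient of the `R`-valued form `x₁(X) y₂(X⁻¹) - x₂(X) y₁(X⁻¹)`. Multiplying by powers of `X`
moves every coefficient to the constant one, so on an `R`-submodule the scalar form vanishes exactly
when the `R`-valued one does. As `K[X]` is a principal ideal ring, every `R`-submodule of `R × R` is
generated by two pairs `(g, f)` and `(0, h)`, on which the `R`-valued form is evaluated directly.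
-/

section PrincipalIdealRing

variable {A B : Type*} [CommRing A] [CommRing B] {π : A →+* B}

theorem exists_dvd_ideal_eq_span_map [IsPrincipalIdealRing A] (hπ : Function.Surjective π) {m : A}
    (hm : π m = 0) (J : Ideal B) : ∃ d, d ∣ m ∧ J = Ideal.span {π d} := by
  obtain ⟨d, hd⟩ := IsPrincipalIdealRing.principal (J.comap π)
  rw [← Ideal.span] at hd
  refine ⟨d, ?_, ?_⟩
  · rw [← Ideal.mem_span_singleton, ← hd, Ideal.mem_comap, hm]
    exact J.zero_mem
  · rw [← Ideal.map_comap_of_surjective π hπ J, hd, Ideal.map_span, Set.image_singleton]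

theorem submodule_prod_eq_span_pair {N : Submodule B (B × B)} {g f h : B} (hgf : (g, f) ∈ N)
    (hfst : N.map (LinearMap.fst B B B) = Ideal.span {g})
    (hinr : N.comap (LinearMap.inr B B B) = Ideal.span {h}) :
    N = Submodule.span B {(g, f), (0, h)} := by
  have h_mem : (0, h) ∈ N := by
    have : h ∈ N.comap (LinearMap.inr B B B) := hinr ▸ Ideal.mem_span_singleton_self h
    simpa using this
  refine le_antisymm (fun x hx => ?_) (Submodule.span_le.2 (by simp [Set.insert_subset_iff, *]))
  obtain ⟨a, ha⟩ : ∃ a, a * g = x.1 := by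
    rw [← Ideal.mem_span_singleton', ← hfst]
    exact Submodule.mem_map_of_mem hx
  have x_sub_mem : (0, x.2 - a * f) ∈ N := by
    simpa [Prod.sub_def, Prod.smul_mk, ha] using N.sub_mem hx (N.smul_mem a hgf)
  obtain ⟨b, hb⟩ : ∃ b, b * h = x.2 - a * f := by
    rw [← Ideal.mem_span_singleton', ← hinr]
    simpa using x_sub_mem
  exact Submodule.mem_span_pair.2 ⟨a, b, by ext <;> simp [ha, hb]⟩

theorem exists_submodule_prod_eq_span_pair [IsPrincipalIdealRing A] (hπ : Function.Surjective π)
    {m : A} (hm : π m = 0) (N : Submodule B (B × B)) :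
    ∃ g f h : A, (g ∣ m ∧ h ∣ m) ∧ N = Submodule.span B {(π g, π f), (0, π h)} := by
  obtain ⟨g, hgm, hg⟩ := exists_dvd_ideal_eq_span_map hπ hm (N.map (LinearMap.fst B B B))
  obtain ⟨h, hhm, hh⟩ := exists_dvd_ideal_eq_span_map hπ hm (N.comap (LinearMap.inr B B B))
  obtain ⟨⟨_, f'⟩, hgf, rfl⟩ : π g ∈ N.map (LinearMap.fst B B B) :=
    hg ▸ Ideal.mem_span_singleton_self _
  obtain ⟨f, rfl⟩ := hπ f'
  exact ⟨g, f, h, ⟨hgm, hhm⟩, submodule_prod_eq_span_pair hgf hg hh⟩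

theorem mem_span_pair_map_iff (hπ : Function.Surjective π) {g f h : A} {x : B × B} :
    x ∈ Submodule.span B {(π g, π f), (0, π h)} ↔
      ∃ a b : A, x.1 = π (a * g) ∧ x.2 = π (a * f + b * h) := by
  simp [Submodule.mem_span_pair, hπ.exists, Prod.ext_iff, eq_comm]

end PrincipalIdealRing

section TwistedSymplectic

variable {R : Type*} [CommRing R] (σ : R →+* R)

/-- The symplectic form on `R × R` twisted by a ring endomorphism `σ`: it is linear in the first
argument and `σ`-semilinear in the second. For `R = K[X] / (X ^ n - 1)` and `σ : X ↦ X⁻¹` it lifts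
the symplectic form on `K ^ n × K ^ n`. -/
def twistedSymplectic (x y : R × R) : R := x.1 * σ y.2 - x.2 * σ y.1

theorem twistedSymplectic_smul_left (r : R) (x y : R × R) :
    twistedSymplectic σ (r • x) y = r * twistedSymplectic σ x y := by
  simp only [twistedSymplectic, Prod.smul_fst, Prod.smul_snd, smul_eq_mul]
  ring

theorem twistedSymplectic_span_pair_eq_zero_iff {g f h : R} :
    (∀ x ∈ Submodule.span R {(g, f), (0, h)}, ∀ y ∈ Submodule.span R {(g, f), (0, h)},
        twistedSymplectic σ x y = 0) ↔
      (σ g * h = 0 ∧ g * σ h = 0) ∧ g * σ f = f * σ g := by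
  constructor
  · intro isotropic
    have gf_mem : (g, f) ∈ Submodule.span R {(g, f), (0, h)} := Submodule.subset_span (by simp)
    have h_mem : (0, h) ∈ Submodule.span R {(g, f), (0, h)} := Submodule.subset_span (by simp)
    refine ⟨⟨?_, ?_⟩, ?_⟩
    · simpa [twistedSymplectic, mul_comm] using isotropic _ h_mem _ gf_mem
    · simpa [twistedSymplectic] using isotropic _ gf_mem _ h_mem
    · simpa [twistedSymplectic, sub_eq_zero] using isotropic _ gf_mem _ gf_mem
  · rintro ⟨⟨hgh, hgh'⟩, hgf⟩ x hx y hy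
    obtain ⟨a, b, rfl⟩ := Submodule.mem_span_pair.1 hx
    obtain ⟨c, d, rfl⟩ := Submodule.mem_span_pair.1 hy
    simp only [twistedSymplectic, Prod.fst_add, Prod.snd_add, Prod.smul_fst, Prod.smul_snd,
      smul_eq_mul, map_add, map_mul, mul_zero, add_zero]
    linear_combination (a * σ c) * hgf + (a * σ d) * hgh' - (b * σ c) * hgh

end TwistedSymplectic

theorem exists_restrictScalars_eq_of_adjoin_eq_top {K R M : Type*} [CommSemiring K] [Semiring R]
    [Algebra K R] [AddCommMonoid M] [Module K M] [Module R M] [IsScalarTower K R M] {t : R}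
    (ht : Algebra.adjoin K {t} = ⊤) (P : Submodule K M) (hP : ∀ x ∈ P, t • x ∈ P) :
    ∃ N : Submodule R M, N.restrictScalars K = P := by
  have smul_mem (r : R) : ∀ x ∈ P, r • x ∈ P := by
    have hr : r ∈ Algebra.adjoin K {t} := ht ▸ Algebra.mem_top
    induction hr using Algebra.adjoin_induction with
    | mem s hs => exact Set.mem_singleton_iff.1 hs ▸ hP
    | algebraMap c => exact fun x hx => (algebraMap_smul R c x).symm ▸ P.smul_mem c hx
    | add r s _ _ hr hs => exact fun x hx => add_smul r s x ▸ P.add_mem (hr x hx) (hs x hx)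
    | mul r s _ _ hr hs => exact fun x hx => mul_smul r s x ▸ hr _ (hs x hx)
  exact ⟨{ P with smul_mem' := fun r x => smul_mem r x }, rfl⟩

/-- The right cyclic shift of a vector over any type; `shiftN` is the case of `ZMod p`. -/
def cyclicShift {α : Type*} {n : ℕ} [NeZero n] (u : Fin n → α) : Fin n → α := fun i => u (i - 1)

/-- The ambient ring `K[X] / (X ^ n - 1)` of cyclic codes of length `n` over `K`. -/
abbrev CyclicCodeRing (K : Type*) [CommRing K] (n : ℕ) : Type _ :=
  AdjoinRoot ((X : K[X]) ^ n - 1)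

namespace CyclicCodeRing

section Invert

variable {K : Type*} [CommRing K] {n : ℕ}

theorem root_pow_eq_one : AdjoinRoot.root ((X : K[X]) ^ n - 1) ^ n = 1 := by
  rw [← sub_eq_zero, ← AdjoinRoot.mk_X, ← map_pow, ← map_one (AdjoinRoot.mk _), ← map_sub,
    AdjoinRoot.mk_self]

theorem root_pow_val_add (i j : Fin n) :
    AdjoinRoot.root ((X : K[X]) ^ n - 1) ^ (↑(i + j) : ℕ) =
      AdjoinRoot.root _ ^ (i : ℕ) * AdjoinRoot.root _ ^ (j : ℕ) := by
  rw [Fin.val_add, ← pow_eq_pow_mod _ root_pow_eq_one, pow_add]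

variable (K n) in
/-- The substitution `X ↦ X⁻¹` on `K[X] / (X ^ n - 1)`, where `X⁻¹` is `X ^ (n - 1)`. -/
noncomputable def invert : CyclicCodeRing K n →ₐ[K] CyclicCodeRing K n :=
  AdjoinRoot.liftAlgHom _ (Algebra.ofId K _) (AdjoinRoot.root _ ^ (n - 1)) (by
    simp [← pow_mul', pow_mul, root_pow_eq_one])

theorem invert_root : invert K n (AdjoinRoot.root _) = AdjoinRoot.root _ ^ (n - 1) :=
  AdjoinRoot.liftAlgHom_root ..

theorem invert_mk (q : K[X]) :
    invert K n (AdjoinRoot.mk _ q) = AdjoinRoot.mk _ (q.comp (X ^ (n - 1))) := by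
  rw [← AdjoinRoot.aeval_eq, ← AdjoinRoot.aeval_eq, ← aeval_algHom_apply, invert_root, aeval_comp,
    map_pow, aeval_X]

theorem twistedSymplectic_span_pair_mk_eq_zero_iff {g f h : K[X]}
    {N : Submodule (CyclicCodeRing K n) (CyclicCodeRing K n × CyclicCodeRing K n)}
    (hN : N = Submodule.span (CyclicCodeRing K n)
      {(AdjoinRoot.mk _ g, AdjoinRoot.mk _ f), (0, AdjoinRoot.mk _ h)}) :
    (∀ x ∈ N, ∀ y ∈ N, twistedSymplectic (invert K n).toRingHom x y = 0) ↔
      (AdjoinRoot.mk (X ^ n - 1) (g.comp (X ^ (n - 1)) * h) = 0 ∧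
        AdjoinRoot.mk (X ^ n - 1) (g * h.comp (X ^ (n - 1))) = 0) ∧
      AdjoinRoot.mk (X ^ n - 1) (g * f.comp (X ^ (n - 1))) =
        AdjoinRoot.mk (X ^ n - 1) (f * g.comp (X ^ (n - 1))) := by
  simp only [hN, twistedSymplectic_span_pair_eq_zero_iff, map_mul, AlgHom.toRingHom_eq_coe,
    RingHom.coe_coe, invert_mk]

end Invert

section Coordinates

variable {K : Type*} [CommRing K] {n : ℕ} [NeZero n]

theorem root_pow_val_mul_invert (i j : Fin n) :
    AdjoinRoot.root ((X : K[X]) ^ n - 1) ^ (i : ℕ) * invert K n (AdjoinRoot.root _ ^ (j : ℕ)) =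
      AdjoinRoot.root _ ^ (↑(i - j) : ℕ) := by
  have root_mul_invert : AdjoinRoot.root _ * invert K n (AdjoinRoot.root _) = 1 := by
    rw [invert_root, mul_pow_sub_one (NeZero.ne n), root_pow_eq_one]
  rw [← sub_add_cancel i j, root_pow_val_add, mul_assoc, map_pow, ← mul_pow, root_mul_invert,
    one_pow, mul_one, sub_add_cancel]

variable [Nontrivial K]

variable (K n) in
/-- The `K`-basis `1, X, …, X ^ (n - 1)` of `K[X] / (X ^ n - 1)`. -/
noncomputable def powBasis : Module.Basis (Fin n) K (CyclicCodeRing K n) :=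
  (AdjoinRoot.powerBasis' (by simpa using monic_X_pow_sub_C (1 : K) (NeZero.ne n))).basis.reindex
    (finCongr (by simpa using natDegree_X_pow_sub_C (r := (1 : K))))

theorem powBasis_apply (i : Fin n) : powBasis K n i = AdjoinRoot.root _ ^ (i : ℕ) := by
  simp [powBasis]

variable (K n) in
/-- The identification `u ↦ u(X)` of `K ^ n` with `K[X] / (X ^ n - 1)`. -/
noncomputable def ofVec : (Fin n → K) ≃ₗ[K] CyclicCodeRing K n :=
  (powBasis K n).equivFun.symm

theorem ofVec_apply (u : Fin n → K) :
    ofVec K n u = ∑ i, u i • AdjoinRoot.root _ ^ (i : ℕ) := by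
  simp [ofVec, Module.Basis.equivFun_symm_apply, powBasis_apply]

theorem mk_sum_monomial (u : Fin n → K) :
    AdjoinRoot.mk _ (∑ i : Fin n, monomial (i : ℕ) (u i)) = ofVec K n u := by
  simp only [ofVec_apply, map_sum, ← smul_X_eq_monomial, ← AdjoinRoot.smul_mk, map_pow,
    AdjoinRoot.mk_X]

theorem ofVec_cyclicShift (u : Fin n → K) :
    ofVec K n (cyclicShift u) = AdjoinRoot.root _ * ofVec K n u := by
  have root_eq : AdjoinRoot.root ((X : K[X]) ^ n - 1) = AdjoinRoot.root _ ^ ((1 : Fin n) : ℕ) := by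
    rw [Fin.val_one', ← pow_eq_pow_mod _ root_pow_eq_one, pow_one]
  rw [ofVec_apply, ofVec_apply, Finset.mul_sum, ← Equiv.sum_comp (Equiv.addRight (1 : Fin n))]
  refine Finset.sum_congr rfl fun i _ => ?_
  rw [Equiv.coe_addRight, cyclicShift, add_sub_cancel_right, root_pow_val_add, ← root_eq,
    mul_smul_comm, mul_comm]

variable (K n) in
/-- The constant coefficient of the representative of degree less than `n`. -/
noncomputable def constCoeff : CyclicCodeRing K n →ₗ[K] K := (powBasis K n).coord 0

theorem constCoeff_root_pow (i : Fin n) :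
    constCoeff K n (AdjoinRoot.root _ ^ (i : ℕ)) = if i = 0 then 1 else 0 := by
  rw [constCoeff, ← powBasis_apply, Module.Basis.coord_apply, Module.Basis.repr_self,
    Finsupp.single_apply]

theorem constCoeff_ofVec_mul_invert (u v : Fin n → K) :
    constCoeff K n (ofVec K n u * invert K n (ofVec K n v)) = u ⬝ᵥ v := by
  simp only [ofVec_apply, map_sum, map_smul, Finset.sum_mul_sum, smul_mul_smul_comm,
    root_pow_val_mul_invert, constCoeff_root_pow, sub_eq_zero, smul_eq_mul, mul_ite, mul_one,
    mul_zero, Finset.sum_ite_eq, Finset.mem_univ, if_true, dotProduct]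

theorem eq_zero_of_forall_constCoeff_mul_eq_zero {r : CyclicCodeRing K n}
    (hr : ∀ s, constCoeff K n (s * r) = 0) : r = 0 := by
  obtain ⟨u, rfl⟩ := (ofVec K n).surjective r
  have hu : u = 0 := dotProduct_eq_zero u fun v => by
    rw [← constCoeff_ofVec_mul_invert, mul_comm, hr]
  rw [hu, map_zero]

theorem forall_constCoeff_twistedSymplectic_eq_zero_iff
    (σ : CyclicCodeRing K n →+* CyclicCodeRing K n)
    (N : Submodule (CyclicCodeRing K n) (CyclicCodeRing K n × CyclicCodeRing K n)) :
    (∀ x ∈ N, ∀ y ∈ N, constCoeff K n (twistedSymplectic σ x y) = 0) ↔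
      ∀ x ∈ N, ∀ y ∈ N, twistedSymplectic σ x y = 0 := by
  refine ⟨fun isotropic x hx y hy => eq_zero_of_forall_constCoeff_mul_eq_zero fun s => ?_,
    fun isotropic x hx y hy => by rw [isotropic x hx y hy, map_zero]⟩
  rw [← twistedSymplectic_smul_left]
  exact isotropic _ (N.smul_mem s hx) y hy

variable (K n) in
/-- The identification of `K ^ n × K ^ n` with `R × R` for `R = K[X] / (X ^ n - 1)`. -/
noncomputable def ofVecPair :
    ((Fin n → K) × (Fin n → K)) ≃ₗ[K] CyclicCodeRing K n × CyclicCodeRing K n :=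
  (ofVec K n).prodCongr (ofVec K n)

theorem constCoeff_twistedSymplectic (x y : (Fin n → K) × (Fin n → K)) :
    constCoeff K n (twistedSymplectic (invert K n).toRingHom (ofVecPair K n x) (ofVecPair K n y)) =
      x.1 ⬝ᵥ y.2 - x.2 ⬝ᵥ y.1 := by
  simp [twistedSymplectic, ofVecPair, constCoeff_ofVec_mul_invert]

theorem isotropic_iff_twistedSymplectic_eq_zero {S : Submodule K ((Fin n → K) × (Fin n → K))}
    {N : Submodule (CyclicCodeRing K n) (CyclicCodeRing K n × CyclicCodeRing K n)}
    (hSN : ∀ x, x ∈ S ↔ ofVecPair K n x ∈ N) :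
    (∀ x ∈ S, ∀ y ∈ S, x.1 ⬝ᵥ y.2 - x.2 ⬝ᵥ y.1 = 0) ↔
      ∀ x ∈ N, ∀ y ∈ N, twistedSymplectic (invert K n).toRingHom x y = 0 := by
  rw [← forall_constCoeff_twistedSymplectic_eq_zero_iff]
  simp only [(ofVecPair K n).surjective.forall, ← hSN, constCoeff_twistedSymplectic]

theorem ofVecPair_cyclicShift (x : (Fin n → K) × (Fin n → K)) :
    ofVecPair K n (cyclicShift x.1, cyclicShift x.2) =
      AdjoinRoot.root ((X : K[X]) ^ n - 1) • ofVecPair K n x :=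
  Prod.ext (ofVec_cyclicShift x.1) (ofVec_cyclicShift x.2)

theorem cyclicShift_mem_iff_exists_submodule (S : Submodule K ((Fin n → K) × (Fin n → K))) :
    (∀ x ∈ S, (cyclicShift x.1, cyclicShift x.2) ∈ S) ↔
      ∃ N : Submodule (CyclicCodeRing K n) (CyclicCodeRing K n × CyclicCodeRing K n),
        ∀ x, x ∈ S ↔ ofVecPair K n x ∈ N := by
  constructor
  · intro hS
    have root_smul_mem : ∀ x ∈ S.map (ofVecPair K n).toLinearMap,
        AdjoinRoot.root ((X : K[X]) ^ n - 1) • x ∈ S.map (ofVecPair K n).toLinearMap := by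
      rintro _ ⟨x, hx, rfl⟩
      exact ⟨_, hS x hx, ofVecPair_cyclicShift x⟩
    obtain ⟨N, hN⟩ :=
      exists_restrictScalars_eq_of_adjoin_eq_top AdjoinRoot.adjoinRoot_eq_top _ root_smul_mem
    refine ⟨N, fun x => ?_⟩
    rw [← Submodule.restrictScalars_mem K N, hN]
    simp
  · rintro ⟨N, hN⟩ x hx
    rw [hN, ofVecPair_cyclicShift]
    exact N.smul_mem _ ((hN x).1 hx)

theorem ofVecPair_mem_span_pair_iff {g f h : K[X]} {x : (Fin n → K) × (Fin n → K)} :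
    ofVecPair K n x ∈ Submodule.span (CyclicCodeRing K n)
        {(AdjoinRoot.mk _ g, AdjoinRoot.mk _ f), (0, AdjoinRoot.mk _ h)} ↔
      ∃ a b : K[X],
        AdjoinRoot.mk (X ^ n - 1) (∑ i : Fin n, monomial (i : ℕ) (x.1 i)) =
          AdjoinRoot.mk _ (a * g) ∧
        AdjoinRoot.mk (X ^ n - 1) (∑ i : Fin n, monomial (i : ℕ) (x.2 i)) =
          AdjoinRoot.mk _ (a * f + b * h) := by
  rw [mem_span_pair_map_iff AdjoinRoot.mk_surjective, mk_sum_monomial, mk_sum_monomial]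
  rfl

end Coordinates

end CyclicCodeRing

open CyclicCodeRing in
theorem stmt_7_general {K : Type*} [Field K] {n : ℕ} [NeZero n]
    (S : Submodule K ((Fin n → K) × (Fin n → K))) :
    ((∀ x ∈ S, ∀ y ∈ S, x.1 ⬝ᵥ y.2 - x.2 ⬝ᵥ y.1 = 0) ∧
        (∀ x ∈ S, (cyclicShift x.1, cyclicShift x.2) ∈ S)) ↔
      ∃ g f h : K[X],
        (g ∣ X ^ n - 1 ∧ h ∣ X ^ n - 1) ∧
        (AdjoinRoot.mk (X ^ n - 1) (g.comp (X ^ (n - 1)) * h) = 0 ∧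
          AdjoinRoot.mk (X ^ n - 1) (g * h.comp (X ^ (n - 1))) = 0) ∧
        (AdjoinRoot.mk (X ^ n - 1) (g * f.comp (X ^ (n - 1))) =
          AdjoinRoot.mk (X ^ n - 1) (f * g.comp (X ^ (n - 1)))) ∧
        (∀ x : (Fin n → K) × (Fin n → K),
          x ∈ S ↔ ∃ a b : K[X],
            AdjoinRoot.mk (X ^ n - 1) (∑ i : Fin n, monomial (i : ℕ) (x.1 i)) =
              AdjoinRoot.mk (X ^ n - 1) (a * g) ∧
            AdjoinRoot.mk (X ^ n - 1) (∑ i : Fin n, monomial (i : ℕ) (x.2 i)) =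
              AdjoinRoot.mk (X ^ n - 1) (a * f + b * h)) := by
  rw [cyclicShift_mem_iff_exists_submodule]
  simp only [← ofVecPair_mem_span_pair_iff]
  constructor
  · rintro ⟨isotropic, N, hSN⟩
    obtain ⟨g, f, h, hdvd, hN⟩ := exists_submodule_prod_eq_span_pair
      AdjoinRoot.mk_surjective (AdjoinRoot.mk_self (f := (X : K[X]) ^ n - 1)) N
    obtain ⟨hgh, hgf⟩ :=
      (twistedSymplectic_span_pair_mk_eq_zero_iff hN).1
        ((isotropic_iff_twistedSymplectic_eq_zero hSN).1 isotropic)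
    exact ⟨g, f, h, hdvd, hgh, hgf, hN ▸ hSN⟩
  · rintro ⟨g, f, h, -, hgh, hgf, hSN⟩
    exact ⟨(isotropic_iff_twistedSymplectic_eq_zero hSN).2
      ((twistedSymplectic_span_pair_mk_eq_zero_iff rfl).2 ⟨hgh, hgf⟩), _, hSN⟩

/-- Let `p` be a prime and `n` a positive integer coprime to `p`.
A linear subspace `S ⊆ F_p^n × F_p^n` is totally isotropic and separately cyclic
iff there exist `g, f, h ∈ F_p[X]` such that (1) `g ∣ X^n − 1` and `h ∣ X^n − 1`;
(2) `g(X^{−1})h(X) = g(X)h(X^{−1}) = 0` in `R = F_p[X]/(X^n−1)`;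
(3) `g(X)f(X^{−1}) = f(X)g(X^{−1})` in `R`; and (4) `S`, viewed in `R × R`, is
exactly the set of pairs `(a g, a f + b h)` with `a, b` ranging over `F_p[X]`. -/
theorem stmt_7 (p n : ℕ) [Fact p.Prime] [NeZero n] (hco : Nat.Coprime n p)
    (S : Submodule (ZMod p) ((Fin n → ZMod p) × (Fin n → ZMod p))) :
    ((∀ ab ∈ S, ∀ cd ∈ S, sympInner ab cd = 0) ∧
        (∀ ab ∈ S, (shiftN ab.1, shiftN ab.2) ∈ S)) ↔
      ∃ g f h : Polynomial (ZMod p),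
        (g ∣ X ^ n - 1 ∧ h ∣ X ^ n - 1) ∧
        (mkR p n (g.comp (X ^ (n - 1)) * h) = 0 ∧
          mkR p n (g * h.comp (X ^ (n - 1))) = 0) ∧
        (mkR p n (g * f.comp (X ^ (n - 1))) = mkR p n (f * g.comp (X ^ (n - 1)))) ∧
        (∀ ab : (Fin n → ZMod p) × (Fin n → ZMod p),
          ab ∈ S ↔ ∃ a b : Polynomial (ZMod p),
            mkR p n (vecPoly ab.1) = mkR p n (a * g) ∧
            mkR p n (vecPoly ab.2) = mkR p n (a * f + b * h)) :=
  stmt_7_general S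
end

section
/- Let m be a positive integer and n = 4^m + 1. Let f(X) be an irreducible factor of X^n − 1 over F_2 with f(X) ≠ X + 1. Then the degree of f is an even number 2t, and there exists an irreducible polynomial f_1(X) ∈ F_4[X] of degree t such that f = f_1 · σ(f_1) in F_4[X], where σ(f_1) is obtained from f_1 by applying the nontrivial automorphism of F_4 to each coefficient. -/
open Polynomial

/-- The field with four elements, `F₄ = F₂(η)` with `η² + η + 1 = 0`. -/
abbrev F4 : Type := GaloisField 2 2

/-!
Let `α` be a root of `f` and `q` the size of the base field `K`. The order of `α` divides
`q ^ k + 1` and `q ^ deg f - 1`. If `deg f` were odd, the gcd of these numbers would divide `2`,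
forcing `α = ±1`; hence `deg f` is even, and the quadratic extension `L` of `K` embeds into `K(α)`.
For every finite Galois extension `L / K` inside `K(α)`, the minimal polynomial of `α` over `K` is
the product of the Galois conjugates of its minimal polynomial over `L`: that product is Galois
invariant, so it descends to `K[X]`, where it vanishes at `α` and has degree
`[L : K] [K(α) : L] = [K(α) : K]`.
-/

open scoped IntermediateField

section GaloisConjugates

variable {K L M : Type*} [Field K] [Field L] [Field M] [Algebra K L] [Algebra K M] [Algebra L M]
  [IsScalarTower K L M]

theorem mem_lifts_of_forall_map_gal_eq [IsGalois K L] {p : L[X]}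
    (hp : ∀ σ : Gal(L/K), p.map (σ : L →+* L) = p) : p ∈ lifts (algebraMap K L) := by
  refine (lifts_iff_coeff_lifts p).2 fun i ↦ ?_
  refine (InfiniteGalois.mem_range_algebraMap_iff_fixed _).2 fun σ ↦ ?_
  simpa only [coeff_map, RingHom.coe_coe] using congrArg (coeff · i) (hp σ)

variable [FiniteDimensional K L]

theorem map_prod_map_gal (p : L[X]) (σ : Gal(L/K)) :
    (∏ τ : Gal(L/K), p.map (τ : L →+* L)).map (σ : L →+* L) =
      ∏ τ : Gal(L/K), p.map (τ : L →+* L) := by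
  simp only [Polynomial.map_prod, Polynomial.map_map]
  exact Equiv.prod_comp (Equiv.mulLeft σ) fun τ : Gal(L/K) ↦ p.map (τ : L →+* L)

theorem natDegree_prod_map_gal [IsGalois K L] {p : L[X]} (hp : p.Monic) :
    (∏ τ : Gal(L/K), p.map (τ : L →+* L)).natDegree = Module.finrank K L * p.natDegree := by
  rw [natDegree_prod_of_monic _ _ fun τ _ ↦ hp.map _]
  simp only [natDegree_map, Finset.sum_const, Finset.card_univ, smul_eq_mul,
    ← IsGalois.card_aut_eq_finrank K L, Nat.card_eq_fintype_card]

variable [FiniteDimensional L M] {α : M}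

theorem finrank_mul_natDegree_minpoly_of_adjoin_eq_top (hα : K⟮α⟯ = ⊤) :
    Module.finrank K L * (minpoly L α).natDegree = (minpoly K α).natDegree := by
  have : FiniteDimensional K M := .trans K L M
  have hαL : L⟮α⟯ = ⊤ := IntermediateField.adjoin_eq_top_of_adjoin_eq_top K hα
  rw [(Field.primitive_element_iff_minpoly_natDegree_eq L α).1 hαL,
    (Field.primitive_element_iff_minpoly_natDegree_eq K α).1 hα, Module.finrank_mul_finrank]

theorem map_minpoly_eq_prod_map_gal_of_adjoin_eq_top [IsGalois K L] (hα : K⟮α⟯ = ⊤) :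
    (minpoly K α).map (algebraMap K L) =
      ∏ τ : Gal(L/K), (minpoly L α).map (τ : L →+* L) := by
  have hαK : IsIntegral K α := isIntegral_trans (R := K) (A := L) α (.of_finite L α)
  have hmonic : (minpoly L α).Monic := minpoly.monic (.of_finite L α)
  obtain ⟨h, hmap, hdeg, hmonic_h⟩ := lifts_and_natDegree_eq_and_monic
    (mem_lifts_of_forall_map_gal_eq (map_prod_map_gal (K := K) (minpoly L α)))
    (monic_prod_of_monic _ _ fun τ _ ↦ hmonic.map _)
  have hroot : aeval α h = 0 := by
    rw [← aeval_map_algebraMap L, hmap, map_prod]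
    refine Finset.prod_eq_zero (Finset.mem_univ 1) ?_
    exact (congrArg (aeval α) Polynomial.map_id).trans (minpoly.aeval L α)
  have hdeg_le : h.natDegree ≤ (minpoly K α).natDegree := by
    rw [hdeg, natDegree_prod_map_gal hmonic,
      finrank_mul_natDegree_minpoly_of_adjoin_eq_top hα]
  rw [← hmap, eq_of_monic_of_dvd_of_natDegree_le (minpoly.monic hαK) hmonic_h
    (minpoly.dvd K α hroot) hdeg_le]

end GaloisConjugates

theorem finrank_adjoinRoot {K : Type*} [Field K] (f : K[X]) :
    Module.finrank K (AdjoinRoot f) = f.natDegree :=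
  finrank_quotient_span_eq_natDegree

theorem exists_irreducible_prod_map_gal_of_finrank_dvd_natDegree {K L : Type*} [Field K] [Finite K]
    [Field L] [Algebra K L] [FiniteDimensional K L] {f : K[X]} (hf : Irreducible f)
    (hmonic : f.Monic) (hdvd : Module.finrank K L ∣ f.natDegree) :
    ∃ g : L[X], Irreducible g ∧ Module.finrank K L * g.natDegree = f.natDegree ∧
      f.map (algebraMap K L) = ∏ τ : Gal(L/K), g.map (τ : L →+* L) := by
  have : Fact (Irreducible f) := ⟨hf⟩
  have : Finite L := Module.finite_of_finite K
  have : FiniteDimensional K (AdjoinRoot f) := hmonic.finite_adjoinRoot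
  have : Finite (AdjoinRoot f) := Module.finite_of_finite K
  obtain ⟨φ⟩ : Nonempty (L →ₐ[K] AdjoinRoot f) :=
    FiniteField.nonempty_algHom_of_finrank_dvd (by rwa [finrank_adjoinRoot])
  algebraize [φ.toRingHom]
  have : IsScalarTower K L (AdjoinRoot f) := .of_algebraMap_eq' φ.comp_algebraMap.symm
  have : FiniteDimensional L (AdjoinRoot f) := .right K L _
  have hroot : K⟮AdjoinRoot.root f⟯ = ⊤ := IntermediateField.adjoin_root_eq_top f
  have hminpoly : minpoly K (AdjoinRoot.root f) = f := by
    simp [AdjoinRoot.minpoly_root hf.ne_zero, hmonic.leadingCoeff]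
  refine ⟨minpoly L (AdjoinRoot.root f), minpoly.irreducible (.of_finite L _), ?_, ?_⟩
  · rw [finrank_mul_natDegree_minpoly_of_adjoin_eq_top hroot, hminpoly]
  · rw [← map_minpoly_eq_prod_map_gal_of_adjoin_eq_top hroot, hminpoly]

theorem prod_gal_eq_mul_of_isQuadraticExtension {K L A : Type*} [Field K] [Field L] [Algebra K L]
    [Algebra.IsQuadraticExtension K L] [CommMonoid A] {σ : Gal(L/K)} (hσ : σ ≠ 1)
    (g : Gal(L/K) → A) : ∏ τ, g τ = g 1 * g σ := by
  classical
  have hcard : Fintype.card Gal(L/K) ≤ 2 :=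
    AlgEquiv.card_le.trans_eq (Algebra.IsQuadraticExtension.finrank_eq_two K L)
  have huniv : {1, σ} = Finset.univ :=
    Finset.eq_of_subset_of_card_le (Finset.subset_univ _) (by rwa [Finset.card_pair hσ.symm])
  rw [← huniv, Finset.prod_pair hσ.symm]

theorem gcd_pow_add_one_pow_sub_one_dvd_two (q k : ℕ) {d : ℕ} (hd : Odd d) :
    Nat.gcd (q ^ k + 1) (q ^ d - 1) ∣ 2 := by
  rcases Nat.eq_zero_or_pos q with rfl | hq
  · rcases k.eq_zero_or_pos with rfl | hk <;> simp [hd.pos.ne', *]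
  have hadd : q ^ k + 1 ∣ q ^ (k * d) + 1 := by
    simpa only [pow_mul, one_pow] using hd.nat_add_dvd_pow_add_pow (q ^ k) 1
  have hsub : q ^ d - 1 ∣ q ^ (k * d) - 1 := by
    simpa only [← pow_mul, mul_comm d k] using Nat.sub_one_dvd_pow_sub_one (q ^ d) k
  have htwo : q ^ (k * d) + 1 - (q ^ (k * d) - 1) = 2 := by
    have := Nat.one_le_pow (k * d) q hq
    omega
  rw [← htwo]
  exact Nat.dvd_sub ((Nat.gcd_dvd_left _ _).trans hadd) ((Nat.gcd_dvd_right _ _).trans hsub)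

theorem dvd_X_pow_sub_one_iff_root_pow_eq_one {R : Type*} [CommRing R] {f : R[X]} {n : ℕ} :
    f ∣ X ^ n - 1 ↔ AdjoinRoot.root f ^ n = 1 := by
  rw [← AdjoinRoot.mk_eq_zero, map_sub, map_pow, AdjoinRoot.mk_X, map_one, sub_eq_zero]

theorem even_natDegree_of_dvd_X_pow_card_pow_add_one_sub_one {K : Type*} [Field K] [Finite K]
    {f : K[X]} (hf : Irreducible f) {k : ℕ} (hdvd : f ∣ X ^ (Nat.card K ^ k + 1) - 1)
    (hndvd : ¬ f ∣ X ^ 2 - 1) : Even f.natDegree := by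
  by_contra hodd
  have : Fact (Irreducible f) := ⟨hf⟩
  have : FiniteDimensional K (AdjoinRoot f) := (AdjoinRoot.powerBasis hf.ne_zero).finite
  have : Finite (AdjoinRoot f) := Module.finite_of_finite K
  have := Fintype.ofFinite (AdjoinRoot f)
  have hpow : AdjoinRoot.root f ^ (Nat.card K ^ k + 1) = 1 :=
    dvd_X_pow_sub_one_iff_root_pow_eq_one.1 hdvd
  have hroot : AdjoinRoot.root f ≠ 0 := (IsUnit.of_pow_eq_one hpow (by simp)).ne_zero
  have hcard : Fintype.card (AdjoinRoot f) = Nat.card K ^ f.natDegree := by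
    rw [← Nat.card_eq_fintype_card, Module.natCard_eq_pow_finrank (K := K), finrank_adjoinRoot]
  have hpow' : AdjoinRoot.root f ^ (Nat.card K ^ f.natDegree - 1) = 1 :=
    hcard ▸ FiniteField.pow_card_sub_one_eq_one _ hroot
  have horder : orderOf (AdjoinRoot.root f) ∣ 2 :=
    (Nat.dvd_gcd (orderOf_dvd_of_pow_eq_one hpow) (orderOf_dvd_of_pow_eq_one hpow')).trans
      (gcd_pow_add_one_pow_sub_one_dvd_two _ _ (Nat.not_even_iff_odd.1 hodd))
  exact hndvd (dvd_X_pow_sub_one_iff_root_pow_eq_one.2 (orderOf_dvd_iff_pow_eq_one.1 horder))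

theorem eq_X_sub_one_or_eq_X_add_one_of_dvd_X_sq_sub_one {K : Type*} [Field K] {f : K[X]}
    (hf : Irreducible f) (hmonic : f.Monic) (hdvd : f ∣ X ^ 2 - 1) : f = X - 1 ∨ f = X + 1 := by
  have eq_of_dvd (a : K) (h : f ∣ X - C a) : f = X - C a :=
    eq_of_monic_of_associated hmonic (monic_X_sub_C a)
      (hf.associated_of_dvd (irreducible_X_sub_C a) h)
  rw [show (X ^ 2 - 1 : K[X]) = (X - C 1) * (X - C (-1)) by simp; ring] at hdvd
  simpa using (hf.prime.dvd_or_dvd hdvd).imp (eq_of_dvd 1) (eq_of_dvd (-1))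

theorem monic_of_ne_zero_of_subsingleton_units {K : Type*} [DivisionRing K] [Subsingleton Kˣ]
    {p : K[X]} (hp : p ≠ 0) : p.Monic :=
  congrArg Units.val (Subsingleton.elim (Units.mk0 _ (leadingCoeff_ne_zero.2 hp)) 1)

theorem frobeniusAlgEquivOfAlgebraic_ne_one (K L : Type*) [Field K] [Fintype K] [Field L]
    [Finite L] [Algebra K L] (h : Module.finrank K L ≠ 1) :
    FiniteField.frobeniusAlgEquivOfAlgebraic K L ≠ 1 := by
  rwa [Ne, ← orderOf_eq_one_iff, FiniteField.orderOf_frobeniusAlgEquivOfAlgebraic]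

theorem stmt_11_general {K L : Type*} [Field K] [Finite K] [Field L] [Algebra K L]
    [Algebra.IsQuadraticExtension K L] {σ : Gal(L/K)} (hσ : σ ≠ 1) {f : K[X]} (hf : Irreducible f)
    (hmonic : f.Monic) {k n : ℕ} (hn : n = Nat.card K ^ k + 1) (hdvd : f ∣ X ^ n - 1)
    (hne_sub : f ≠ X - 1) (hne_add : f ≠ X + 1) :
    ∃ t : ℕ, f.natDegree = 2 * t ∧
      ∃ f₁ : L[X], Irreducible f₁ ∧ f₁.natDegree = t ∧
        f.map (algebraMap K L) = f₁ * f₁.map (σ : L →+* L) := by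
  have hndvd : ¬ f ∣ X ^ 2 - 1 := fun h ↦
    (eq_X_sub_one_or_eq_X_add_one_of_dvd_X_sq_sub_one hf hmonic h).elim hne_sub hne_add
  have heven : Even f.natDegree :=
    even_natDegree_of_dvd_X_pow_card_pow_add_one_sub_one hf (hn ▸ hdvd) hndvd
  have hrank : Module.finrank K L = 2 := Algebra.IsQuadraticExtension.finrank_eq_two K L
  obtain ⟨f₁, hf₁, hdeg, hprod⟩ := exists_irreducible_prod_map_gal_of_finrank_dvd_natDegree
    (L := L) hf hmonic (hrank ▸ heven.two_dvd)
  refine ⟨f₁.natDegree, by rw [← hdeg, hrank], f₁, hf₁, rfl, ?_⟩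
  rw [hprod, prod_gal_eq_mul_of_isQuadraticExtension hσ]
  exact congrArg (· * _) Polynomial.map_id

instance isQuadraticExtension_galoisField_two (p : ℕ) [Fact p.Prime] :
    Algebra.IsQuadraticExtension (ZMod p) (GaloisField p 2) where
  finrank_eq_two' := GaloisField.finrank p two_ne_zero

theorem coe_frobeniusAlgEquivOfAlgebraic_zmod (p : ℕ) [Fact p.Prime] (L : Type*) [Field L]
    [Algebra (ZMod p) L] [Algebra.IsAlgebraic (ZMod p) L] [CharP L p] :
    (FiniteField.frobeniusAlgEquivOfAlgebraic (ZMod p) L : L →+* L) = frobenius L p := by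
  ext x
  simp [frobenius_def]

/-- Let `n = 4^m + 1` for a positive integer `m` and let `f` be an
irreducible factor of `X^n − 1` over `F₂` with `f ≠ X + 1`.  Then `deg f = 2t` is
even and, over `F₄`, `f` splits as `f = f₁·σ(f₁)` where `f₁ ∈ F₄[X]` is irreducible
of degree `t` and `σ` is the nontrivial automorphism of `F₄` (the Frobenius
`x ↦ x²`) applied coefficientwise. -/
theorem stmt_11 (m n : ℕ) (hm : 0 < m) (hn : n = 4 ^ m + 1)
    (f : Polynomial (ZMod 2)) (hf : Irreducible f)
    (hdvd : f ∣ X ^ n - 1) (hne : f ≠ X + 1) :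
    ∃ t : ℕ, f.natDegree = 2 * t ∧
      ∃ f1 : Polynomial F4, Irreducible f1 ∧ f1.natDegree = t ∧
        f.map (algebraMap (ZMod 2) F4) = f1 * f1.map (frobenius F4 2) := by
  rw [← coe_frobeniusAlgEquivOfAlgebraic_zmod]
  exact stmt_11_general
    (frobeniusAlgEquivOfAlgebraic_ne_one _ _ (by simp [GaloisField.finrank 2 two_ne_zero])) hf
    (monic_of_ne_zero_of_subsingleton_units hf.ne_zero) (k := 2 * m) (by simp [hn, pow_mul]) hdvd
    (CharTwo.sub_eq_add (X : (ZMod 2)[X]) 1 ▸ hne) hne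
end

section
/- Let m be a positive integer, n = 4^m + 1, and let g ∈ F_2[X] and h ∈ F_4[X] be monic polynomials with g·h·σ(h) = X^n − 1 in F_4[X]. Let S be the ideal of F_4[X]/(X^n−1) generated by g·h. Then S is totally isotropic: for any two elements u = a + ηb and v = c + ηd of S, where a, b, c, d lie in the image of F_2[X] in F_4[X]/(X^n−1), the identity a(X)d(X^{−1}) = b(X)c(X^{−1}) holds in F_4[X]/(X^n−1). -/
open Polynomial

/-- The image in `F₄[X]/(X^n − 1)` of a polynomial with `F₂` coefficients. -/
noncomputable def mk2 (n : ℕ) (q : Polynomial (ZMod 2)) :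
    Polynomial F4 ⧸ Ideal.span {(X : Polynomial F4) ^ n - 1} :=
  Ideal.Quotient.mk _ (q.map (algebraMap (ZMod 2) F4))

/-!
Let `x` be the class of `X`, and let `Q` be a power of the order of the base field with
`x ^ Q = x⁻¹` and `η ^ Q = η`. Raising `c(x) + η d(x)` to the power `Q` gives `c(x⁻¹) + η d(x⁻¹)`,
so the ideal `S` generated by `f = g h` is stable under `x ↦ x⁻¹`, and it is enough to show
`a d = b c` for `u = a + η b` and `v = c + η d` in `S`. The conjugation `σ` fixes `g, a, b, c, d`,
so `f σ(f) = g (g h σ(h)) = 0`, which gives `u σ(v) = v σ(u) = 0`. Hence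
`0 = u σ(v) - v σ(u) = (σ(η) - η) (a d - b c)`, where `σ(η) - η` is a unit.
-/

section Isotropy

variable {A : Type*} [CommRing A] {σ : A →+* A} {f : A}

theorem mul_map_eq_zero_of_mem_span_singleton (hf : f * σ f = 0) {u v : A}
    (hu : u ∈ Ideal.span {f}) (hv : v ∈ Ideal.span {f}) : u * σ v = 0 := by
  obtain ⟨s, rfl⟩ := Ideal.mem_span_singleton.mp hu
  obtain ⟨t, rfl⟩ := Ideal.mem_span_singleton.mp hv
  rw [map_mul, mul_mul_mul_comm, hf, zero_mul]

theorem mul_eq_mul_of_add_mul_mem_span_singleton (hf : f * σ f = 0) {η : A}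
    (hη : IsUnit (σ η - η)) {a b c d : A} (ha : σ a = a) (hb : σ b = b) (hc : σ c = c)
    (hd : σ d = d) (hu : a + η * b ∈ Ideal.span {f}) (hv : c + η * d ∈ Ideal.span {f}) :
    a * d = b * c := by
  have huv : (a + η * b) * (c + σ η * d) = 0 := by
    simpa only [map_add, map_mul, hc, hd] using mul_map_eq_zero_of_mem_span_singleton hf hu hv
  have hvu : (c + η * d) * (a + σ η * b) = 0 := by
    simpa only [map_add, map_mul, ha, hb] using mul_map_eq_zero_of_mem_span_singleton hf hv hu
  refine hη.mul_left_cancel ?_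
  linear_combination huv - hvu

end Isotropy

section Frobenius

variable {K A : Type*} [Field K] [Fintype K] [CommRing A] [Algebra K A]

theorem frobeniusAlgHom_pow_apply (k : ℕ) (y : A) :
    (FiniteField.frobeniusAlgHom K A ^ k) y = y ^ Fintype.card K ^ k := by
  rw [AlgHom.coe_pow, FiniteField.coe_frobeniusAlgHom, pow_iterate]

theorem aeval_add_mul_aeval_pow_card_pow {k : ℕ} {η : A} (hη : η ^ Fintype.card K ^ k = η)
    (x : A) (c d : K[X]) :
    (aeval x c + η * aeval x d) ^ Fintype.card K ^ k =
      aeval (x ^ Fintype.card K ^ k) c + η * aeval (x ^ Fintype.card K ^ k) d := by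
  simp only [← frobeniusAlgHom_pow_apply (K := K)] at hη ⊢
  rw [map_add, map_mul, hη, aeval_algHom_apply, aeval_algHom_apply]

theorem aeval_mul_aeval_pow_card_pow_eq {σ : A →ₐ[K] A} {x η f : A} {k : ℕ} (hx : σ x = x)
    (hηk : η ^ Fintype.card K ^ k = η) (hη : IsUnit (σ η - η)) (hf : f * σ f = 0)
    {a b c d : K[X]} (hu : aeval x a + η * aeval x b ∈ Ideal.span {f})
    (hv : aeval x c + η * aeval x d ∈ Ideal.span {f}) :
    aeval x a * aeval (x ^ Fintype.card K ^ k) d =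
      aeval x b * aeval (x ^ Fintype.card K ^ k) c := by
  have map_aeval {y : A} (hy : σ y = y) (p : K[X]) : σ (aeval y p) = aeval y p := by
    rw [← aeval_algHom_apply, hy]
  have hxk : σ (x ^ Fintype.card K ^ k) = x ^ Fintype.card K ^ k := by rw [map_pow, hx]
  have hv_pow := Ideal.pow_mem_of_mem _ hv (Fintype.card K ^ k) (pow_pos Fintype.card_pos k)
  rw [aeval_add_mul_aeval_pow_card_pow hηk] at hv_pow
  exact mul_eq_mul_of_add_mul_mem_span_singleton (σ := (σ : A →+* A)) hf hη
    (map_aeval hx a) (map_aeval hx b) (map_aeval hxk c) (map_aeval hxk d) hu hv_pow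

end Frobenius

theorem pow_sub_one_eq_pow_of_dvd_add_one {M : Type*} [Monoid M] {x : M} {n N : ℕ}
    (hx : x ^ n = 1) (hn : n ∣ N + 1) : x ^ (n - 1) = x ^ N := by
  refine pow_eq_pow_of_modEq (Nat.ModEq.add_right_cancel' 1 ?_) hx
  rw [Nat.sub_add_cancel (Nat.pos_of_dvd_of_pos hn N.succ_pos)]
  exact ((Nat.modEq_zero_iff_dvd.mpr dvd_rfl).trans (Nat.modEq_zero_iff_dvd.mpr hn).symm)

/-- The ring `L[X]/(X^n − 1)`, whose ideals are the cyclic codes of length `n` over `L`. -/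
abbrev CyclicRing (L : Type*) [CommRing L] (n : ℕ) : Type _ :=
  L[X] ⧸ Ideal.span {(X : L[X]) ^ n - 1}

namespace CyclicRing

variable {K L : Type*} [CommSemiring K] [CommRing L] [Algebra K L]

/-- The quotient map `L[X] → L[X]/(X^n − 1)`. -/
noncomputable abbrev mk (n : ℕ) : L[X] →+* CyclicRing L n :=
  Ideal.Quotient.mk _

theorem mk_eq_zero_iff_dvd {n : ℕ} {p : L[X]} : mk n p = 0 ↔ X ^ n - 1 ∣ p := by
  rw [Ideal.Quotient.eq_zero_iff_mem, Ideal.mem_span_singleton]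

theorem mk_X_pow (n : ℕ) : mk n (X : L[X]) ^ n = 1 := by
  rw [← sub_eq_zero, ← map_pow, ← map_one (mk n), ← map_sub, mk_eq_zero_iff_dvd]

theorem mk_map_algebraMap (n : ℕ) (p : K[X]) :
    mk n (p.map (algebraMap K L)) = aeval (mk n (X : L[X])) p := by
  rw [← aeval_map_algebraMap L]
  change Ideal.Quotient.mkₐ L _ _ = aeval (Ideal.Quotient.mkₐ L _ X) _
  rw [aeval_algHom_apply, aeval_X_left_apply]

/-- The endomorphism of `L[X]/(X^n − 1)` that applies `σ` to the coefficients. -/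
noncomputable def mapCoeff (n : ℕ) (σ : L →ₐ[K] L) : CyclicRing L n →ₐ[K] CyclicRing L n :=
  Ideal.quotientMapₐ _ (mapAlgHom σ) <| by
    rw [Ideal.span_singleton_le_iff_mem, Ideal.mem_comap]
    simp

theorem mapCoeff_mk (n : ℕ) (σ : L →ₐ[K] L) (p : L[X]) :
    mapCoeff n σ (mk n p) = mk n (p.map (σ : L →+* L)) :=
  rfl

theorem mapCoeff_algebraMap (n : ℕ) (σ : L →ₐ[K] L) (y : L) :
    mapCoeff n σ (algebraMap L _ y) = algebraMap L _ (σ y) :=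
  (mapCoeff_mk n σ (C y)).trans (congrArg (mk n) (map_C _))

end CyclicRing

theorem mul_mul_map_dvd_mul_map {K L : Type*} [CommSemiring K] [CommRing L] [Algebra K L]
    (σ : L →ₐ[K] L) (g : K[X]) (h : L[X]) :
    g.map (algebraMap K L) * h * h.map (σ : L →+* L) ∣
      g.map (algebraMap K L) * h * (g.map (algebraMap K L) * h).map (σ : L →+* L) := by
  refine ⟨g.map (algebraMap K L), ?_⟩
  rw [Polynomial.map_mul, Polynomial.map_map, σ.comp_algebraMap]
  ring

namespace F4

theorem pow_two_pow_two_mul (m : ℕ) (y : F4) : y ^ 2 ^ (2 * m) = y := by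
  have := Fintype.ofFinite F4
  have hcard : Fintype.card F4 = 2 ^ 2 := by
    rw [← Nat.card_eq_fintype_card, GaloisField.card 2 2 two_ne_zero]
  rw [pow_mul, ← hcard, FiniteField.pow_card_pow]

theorem isUnit_frobenius_sub_self {η : F4} (hη : η ^ 2 + η + 1 = 0) :
    IsUnit (frobenius F4 2 η - η) := by
  have frobenius_sub_self : frobenius F4 2 η - η = 1 := by
    rw [frobenius_def]
    linear_combination hη - (η + 1) * CharTwo.two_eq_zero (R := F4)
  exact frobenius_sub_self ▸ isUnit_one

end F4

open CyclicRing

theorem stmt_12_general {K L : Type*} [Field K] [Fintype K] [CommRing L] [Algebra K L] {n k : ℕ}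
    (hn : n ∣ Fintype.card K ^ k + 1) (σ : L →ₐ[K] L) {η : L}
    (hηk : η ^ Fintype.card K ^ k = η) (hη : IsUnit (σ η - η)) {f : L[X]}
    (hf : X ^ n - 1 ∣ f * f.map (σ : L →+* L)) {a b c d : K[X]}
    (hu : mk n (a.map (algebraMap K L)) + algebraMap L _ η * mk n (b.map (algebraMap K L)) ∈
      Ideal.span {mk n f})
    (hv : mk n (c.map (algebraMap K L)) + algebraMap L _ η * mk n (d.map (algebraMap K L)) ∈
      Ideal.span {mk n f}) :
    mk n ((a * d.comp (X ^ (n - 1))).map (algebraMap K L)) =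
      mk n ((b * c.comp (X ^ (n - 1))).map (algebraMap K L)) := by
  simp only [Polynomial.map_mul, map_mul, mk_map_algebraMap, aeval_comp, aeval_X_pow] at hu hv ⊢
  rw [pow_sub_one_eq_pow_of_dvd_add_one (mk_X_pow n) hn]
  refine aeval_mul_aeval_pow_card_pow_eq (σ := mapCoeff n σ) ?_ ?_ ?_ ?_ hu hv
  · rw [mapCoeff_mk, map_X]
  · rw [← map_pow, hηk]
  · rw [mapCoeff_algebraMap, ← map_sub]
    exact hη.map _
  · rwa [mapCoeff_mk, ← map_mul, mk_eq_zero_iff_dvd]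

/-- Let `n = 4^m + 1`, let `g ∈ F₂[X]` and `h ∈ F₄[X]` be monic
with `g·h·σ(h) = X^n − 1` over `F₄` (σ the nontrivial automorphism of `F₄`, i.e.
the Frobenius `x ↦ x²`, applied coefficientwise), and let `S` be the ideal of
`F₄[X]/(X^n−1)` generated by `g·h`.  Then `S` is totally isotropic: for any two
elements `u = a + ηb` and `v = c + ηd` of `S` with `a,b,c,d` in the image of
`F₂[X]`, the identity `a(X)d(X^{−1}) = b(X)c(X^{−1})` holds in `F₄[X]/(X^n−1)`
(`X^{−1}` being the class of `X^{n−1}`). -/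
theorem stmt_12 (m n : ℕ) (hm : 0 < m) (hn : n = 4 ^ m + 1)
    (η : F4) (hη : η ^ 2 + η + 1 = 0)
    (g : Polynomial (ZMod 2)) (h : Polynomial F4)
    (hg : g.Monic) (hh : h.Monic)
    (hfact : g.map (algebraMap (ZMod 2) F4) * h * h.map (frobenius F4 2) =
      X ^ n - 1) :
    ∀ a b c d : Polynomial (ZMod 2),
      mk2 n a + algebraMap F4 _ η * mk2 n b ∈
        Ideal.span {Ideal.Quotient.mk (Ideal.span {(X : Polynomial F4) ^ n - 1})
          (g.map (algebraMap (ZMod 2) F4) * h)} →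
      mk2 n c + algebraMap F4 _ η * mk2 n d ∈
        Ideal.span {Ideal.Quotient.mk (Ideal.span {(X : Polynomial F4) ^ n - 1})
          (g.map (algebraMap (ZMod 2) F4) * h)} →
      mk2 n (a * d.comp (X ^ (n - 1))) = mk2 n (b * c.comp (X ^ (n - 1))) := by
  intro a b c d hu hv
  have hdvd : n ∣ 2 ^ (2 * m) + 1 := dvd_of_eq (by rw [hn, pow_mul]; norm_num)
  -- `Fintype.card (ZMod 2)` reduces to `2`, so `σ` unfolds to `frobenius F4 2`.
  let σ := FiniteField.frobeniusAlgHom (ZMod 2) F4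
  exact stmt_12_general hdvd σ (F4.pow_two_pow_two_mul m η) (F4.isUnit_frobenius_sub_self hη)
    (hfact ▸ mul_mul_map_dvd_mul_map σ g h) hu hv
end

section
/- Let m be a positive integer, n = 4^m + 1, and let g ∈ F_2[X] and h ∈ F_4[X] be monic polynomials with g·h·σ(h) = X^n − 1 in F_4[X]. Let S be the ideal of F_4[X]/(X^n−1) generated by g·h. Then the centraliser of S is exactly the ideal generated by h: an element w = c + ηd of F_4[X]/(X^n−1) (with c, d in the image of F_2[X]) belongs to the ideal generated by h if and only if for every element u = a + ηb of S (with a, b in the image of F_2[X]) the identity a(X)d(X^{−1}) = b(X)c(X^{−1}) holds in F_4[X]/(X^n−1). -/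
open Polynomial

/-!
Let `N = |K|^m` and `n = N + 1`. Modulo `X^n - 1` the inverse of `X` is `X^N`, and
`w(X^N) = w(X)^N` over `K`; since `h` is squarefree, it divides `w(X⁻¹)` exactly when it
divides `w`. So `w(X⁻¹)` may be replaced by `w = c + ηd`, and the orthogonality of `u = a + ηb`
and `w` becomes the vanishing of `a d - b c` modulo `g h σ(h)`. Extending `σ` to `K[X]`
coefficientwise, `u σ(w) - σ(u) w = (σ(η) - η) (a d - b c)`. As `σ` fixes `g`, the left-hand side
is divisible by `g h σ(h)` for every multiple `u` of `g h` as soon as `h ∣ w`, and conversely the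
two choices `u = g h` and `u = η g h` force `h ∣ w`.
-/

theorem mk_mem_span_mk_iff_dvd {R : Type*} [CommRing R] {P f : R} (hf : f ∣ P) (w : R) :
    Ideal.Quotient.mk (Ideal.span {P}) w ∈ Ideal.span {Ideal.Quotient.mk (Ideal.span {P}) f} ↔
      f ∣ w := by
  have hle : Ideal.span {P} ≤ Ideal.span {f} := Ideal.span_singleton_le_span_singleton.2 hf
  rw [← Set.image_singleton, ← Ideal.map_span, Ideal.mem_quotient_iff_mem hle,
    Ideal.mem_span_singleton]

theorem dvd_iff_forall_dvd_mul_map_sub {R : Type*} [CommRing R] (σ : R →+* R) {η G h : R}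
    (hη : IsUnit (σ η - η)) (hG : σ G = G) (hreg : IsLeftRegular (G * σ h)) (w : R) :
    h ∣ w ↔ ∀ u, G * h ∣ u → G * h * σ h ∣ u * σ w - σ u * w := by
  constructor
  · intro hw u hu
    have hσw : σ h ∣ σ w := map_dvd σ hw
    have hσu : G * σ h ∣ σ u := by simpa only [map_mul, hG] using map_dvd σ hu
    refine dvd_sub (mul_dvd_mul hu hσw) ?_
    rw [mul_right_comm]
    exact mul_dvd_mul hσu hw
  · intro H
    have h_gen : G * h * σ h ∣ G * h * σ w - G * σ h * w := by
      simpa only [map_mul, hG] using H (G * h) dvd_rfl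
    have h_eta : G * h * σ h ∣ η * (G * h) * σ w - σ η * (G * σ h) * w := by
      simpa only [map_mul, hG] using H (η * (G * h)) (dvd_mul_left _ _)
    have h_unit : G * h * σ h ∣ (σ η - η) * (G * σ h * w) := by
      convert dvd_sub (h_gen.mul_left η) h_eta using 1
      ring
    obtain ⟨v, hv⟩ := hη.dvd_mul_left.1 h_unit
    exact ⟨v, hreg (hv.trans (by ring))⟩

section Pairs

variable {R S : Type*} [CommRing R] [CommRing S] [Algebra R S]

/-- The polynomial `a + ηb` over `S` identified with the pair `(a, b)` of polynomials over `R`. -/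
noncomputable def ofPair (η : S) (a b : R[X]) : S[X] :=
  a.map (algebraMap R S) + C η * b.map (algebraMap R S)

theorem map_algHom_map_algebraMap (σ : S →ₐ[R] S) (p : R[X]) :
    (p.map (algebraMap R S)).map (σ : S →+* S) = p.map (algebraMap R S) := by
  rw [Polynomial.map_map, σ.comp_algebraMap]

theorem ofPair_mul_map_sub_map_mul_ofPair (σ : S →ₐ[R] S) (η : S) (a b c d : R[X]) :
    ofPair η a b * (ofPair η c d).map (σ : S →+* S) -
        (ofPair η a b).map (σ : S →+* S) * ofPair η c d =
      C (σ η - η) * (a * d - b * c).map (algebraMap R S) := by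
  simp only [ofPair, Polynomial.map_add, Polynomial.map_sub, Polynomial.map_mul, map_C,
    map_algHom_map_algebraMap, C_sub, RingHom.coe_coe]
  ring

theorem ofPair_comp_X_pow (η : S) (a b : R[X]) (k : ℕ) :
    ofPair η (a.comp (X ^ k)) (b.comp (X ^ k)) = expand S k (ofPair η a b) := by
  simp only [ofPair, ← expand_eq_comp_X_pow, map_expand, map_add, map_mul, expand_C]

end Pairs

section QuadraticExtension

variable {F K : Type*} [Field F] [Field K] [Algebra F K] [Algebra.IsQuadraticExtension F K]

theorem exists_eq_algebraMap_add_mul_algebraMap {η : K} (hη : η ∉ Set.range (algebraMap F K))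
    (x : K) : ∃ s t : F, x = algebraMap F K s + η * algebraMap F K t := by
  have hli : LinearIndependent F ![1, η] :=
    (LinearIndependent.pair_iff' one_ne_zero).2 fun s hs ↦
      hη ⟨s, by rw [Algebra.algebraMap_eq_smul_one, hs]⟩
  have hspan : x ∈ Submodule.span F (Set.range ![1, η]) := by
    rw [hli.span_eq_top_of_card_eq_finrank
      (by simp [Algebra.IsQuadraticExtension.finrank_eq_two F K])]
    exact Submodule.mem_top
  rw [Matrix.range_cons_cons_empty, Submodule.mem_span_pair] at hspan
  obtain ⟨s, t, rfl⟩ := hspan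
  exact ⟨s, t, by rw [Algebra.algebraMap_eq_smul_one, Algebra.smul_def t, mul_comm]⟩

theorem exists_eq_ofPair {η : K} (hη : η ∉ Set.range (algebraMap F K)) (p : K[X]) :
    ∃ a b : F[X], p = ofPair η a b := by
  induction p using Polynomial.induction_on' with
  | add p q hp hq =>
    obtain ⟨a, b, rfl⟩ := hp
    obtain ⟨a', b', rfl⟩ := hq
    exact ⟨a + a', b + b', by simp only [ofPair, Polynomial.map_add]; ring⟩
  | monomial k x =>
    obtain ⟨s, t, rfl⟩ := exists_eq_algebraMap_add_mul_algebraMap hη x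
    exact ⟨monomial k s, monomial k t, by
      simp only [ofPair, map_monomial, C_mul_monomial, map_add]⟩

theorem dvd_ofPair_iff_forall_dvd_symplectic (σ : K →ₐ[F] K) {η : K} (hη : σ η ≠ η) {g : F[X]}
    {h : K[X]} (hg : g ≠ 0) (hh : h ≠ 0) (c d : F[X]) :
    h ∣ ofPair η c d ↔
      ∀ a b : F[X], g.map (algebraMap F K) * h ∣ ofPair η a b →
        g.map (algebraMap F K) * h * h.map (σ : K →+* K) ∣
          (a * d - b * c).map (algebraMap F K) := by
  have hη_range : η ∉ Set.range (algebraMap F K) := by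
    rintro ⟨s, rfl⟩
    exact hη (σ.commutes s)
  have h_unit : IsUnit (C (σ η - η)) := isUnit_C.2 (sub_ne_zero.2 hη).isUnit
  have h_reg : IsLeftRegular (g.map (algebraMap F K) * h.map (σ : K →+* K)) :=
    (IsRegular.of_ne_zero <| mul_ne_zero (map_ne_zero hg) (map_ne_zero hh)).left
  have h_form (a b : F[X]) (P : K[X]) :
      P ∣ ofPair η a b * (ofPair η c d).map (σ : K →+* K) -
          (ofPair η a b).map (σ : K →+* K) * ofPair η c d ↔
        P ∣ (a * d - b * c).map (algebraMap F K) := by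
    rw [ofPair_mul_map_sub_map_mul_ofPair, h_unit.dvd_mul_left]
  rw [dvd_iff_forall_dvd_mul_map_sub (mapRingHom (σ : K →+* K)) (η := C η)
    (by simpa using h_unit) (map_algHom_map_algebraMap σ g) h_reg]
  refine ⟨fun H a b hu ↦ (h_form a b _).1 (H _ hu), fun H u hu ↦ ?_⟩
  obtain ⟨a, b, rfl⟩ := exists_eq_ofPair hη_range u
  exact (h_form a b _).2 (H a b hu)

end QuadraticExtension

theorem expand_card_pow {K : Type*} [Field K] [Finite K] (m : ℕ) (p : K[X]) :
    expand K (Nat.card K ^ m) p = p ^ Nat.card K ^ m := by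
  have := Fintype.ofFinite K
  induction m with
  | zero => simp only [pow_zero, expand_one, pow_one]
  | succ m ih =>
    rw [pow_succ, expand_mul, Nat.card_eq_fintype_card, FiniteField.expand_card,
      ← Nat.card_eq_fintype_card, map_pow, ih, pow_mul]

theorem squarefree_X_pow_card_pow_add_one_sub_one {K : Type*} [Field K] [Finite K] {m : ℕ}
    (hm : m ≠ 0) : Squarefree ((X : K[X]) ^ (Nat.card K ^ m + 1) - 1) := by
  have := Fintype.ofFinite K
  refine (X_pow_sub_one_separable_iff.2 ?_).squarefree
  simp [Nat.card_eq_fintype_card, hm]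

theorem stmt_13_general {F K : Type*} [Field F] [Field K] [Finite K] [Algebra F K]
    [Algebra.IsQuadraticExtension F K] (σ : K →ₐ[F] K) {η : K} (hη : σ η ≠ η) {m n : ℕ}
    (hm : m ≠ 0) (hn : n = Nat.card K ^ m + 1) {g : F[X]} {h : K[X]}
    (hfact : g.map (algebraMap F K) * h * h.map (σ : K →+* K) = X ^ n - 1) (c d : F[X]) :
    Ideal.Quotient.mk (Ideal.span {(X : K[X]) ^ n - 1}) (ofPair η c d) ∈
        Ideal.span {Ideal.Quotient.mk (Ideal.span {(X : K[X]) ^ n - 1}) h} ↔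
      ∀ a b : F[X],
        Ideal.Quotient.mk (Ideal.span {(X : K[X]) ^ n - 1}) (ofPair η a b) ∈
          Ideal.span {Ideal.Quotient.mk (Ideal.span {(X : K[X]) ^ n - 1})
            (g.map (algebraMap F K) * h)} →
        Ideal.Quotient.mk (Ideal.span {(X : K[X]) ^ n - 1})
            ((a * d.comp (X ^ (n - 1))).map (algebraMap F K)) =
          Ideal.Quotient.mk (Ideal.span {(X : K[X]) ^ n - 1})
            ((b * c.comp (X ^ (n - 1))).map (algebraMap F K)) := by
  have hgh_dvd : g.map (algebraMap F K) * h ∣ X ^ n - 1 := hfact ▸ dvd_mul_right _ _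
  have hh_dvd : h ∣ X ^ n - 1 := (dvd_mul_left _ _).trans hgh_dvd
  have hsq : Squarefree ((X : K[X]) ^ n - 1) := hn ▸ squarefree_X_pow_card_pow_add_one_sub_one hm
  have hg : g ≠ 0 := by
    rintro rfl
    exact hsq.ne_zero (by simp [← hfact])
  have hh_sq : Squarefree h := hsq.squarefree_of_dvd hh_dvd
  have h_reflect : h ∣ ofPair η c d ↔
      h ∣ ofPair η (c.comp (X ^ (n - 1))) (d.comp (X ^ (n - 1))) := by
    rw [ofPair_comp_X_pow, hn, Nat.add_sub_cancel, expand_card_pow,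
      hh_sq.dvd_pow_iff_dvd (pow_ne_zero m Nat.card_pos.ne')]
  simp only [mk_mem_span_mk_iff_dvd hh_dvd, mk_mem_span_mk_iff_dvd hgh_dvd, Ideal.Quotient.eq,
    Ideal.mem_span_singleton, ← Polynomial.map_sub, h_reflect]
  rw [dvd_ofPair_iff_forall_dvd_symplectic σ hη hg hh_sq.ne_zero, hfact]

theorem coe_frobeniusAlgHom_zmod (p : ℕ) [Fact p.Prime] (R : Type*) [CommRing R]
    [Algebra (ZMod p) R] [CharP R p] :
    (FiniteField.frobeniusAlgHom (ZMod p) R : R →+* R) = frobenius R p := by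
  ext x
  simp [frobenius_def]

theorem frobeniusAlgHom_zmod_two_apply_ne {R : Type*} [CommRing R] [Nontrivial R]
    [Algebra (ZMod 2) R] [CharP R 2] {η : R} (hη : η ^ 2 + η + 1 = 0) :
    FiniteField.frobeniusAlgHom (ZMod 2) R η ≠ η := by
  intro hfix
  rw [FiniteField.frobeniusAlgHom_apply, ZMod.card] at hfix
  rw [hfix, CharTwo.add_self_eq_zero, zero_add] at hη
  exact one_ne_zero hη

instance : Algebra.IsQuadraticExtension (ZMod 2) F4 where
  finrank_eq_two' := GaloisField.finrank 2 two_ne_zero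

theorem mk_ofPair_eq_mk2_add_mul_mk2 (n : ℕ) (η : F4) (a b : (ZMod 2)[X]) :
    Ideal.Quotient.mk (Ideal.span {(X : F4[X]) ^ n - 1}) (ofPair η a b) =
      mk2 n a + algebraMap F4 _ η * mk2 n b := by
  rw [ofPair, map_add, map_mul]
  rfl

/-- Let `n = 4^m + 1`, let `g ∈ F₂[X]` and `h ∈ F₄[X]` be monic
with `g·h·σ(h) = X^n − 1` over `F₄` (σ the nontrivial automorphism of `F₄`, i.e.
the Frobenius `x ↦ x²`, applied coefficientwise), and let `S` be the ideal of
`F₄[X]/(X^n−1)` generated by `g·h`.  Then the centraliser of `S` is exactly the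
ideal generated by `h`: an element `w = c + ηd` (with `c, d` in the image of
`F₂[X]`) lies in the ideal generated by `h` iff for every `u = a + ηb ∈ S` (with
`a, b` in the image of `F₂[X]`) the identity `a(X)d(X^{−1}) = b(X)c(X^{−1})`
holds in `F₄[X]/(X^n−1)`. -/
theorem stmt_13 (m n : ℕ) (hm : 0 < m) (hn : n = 4 ^ m + 1)
    (η : F4) (hη : η ^ 2 + η + 1 = 0)
    (g : Polynomial (ZMod 2)) (h : Polynomial F4)
    (hg : g.Monic) (hh : h.Monic)
    (hfact : g.map (algebraMap (ZMod 2) F4) * h * h.map (frobenius F4 2) =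
      X ^ n - 1) :
    ∀ c d : Polynomial (ZMod 2),
      (mk2 n c + algebraMap F4 _ η * mk2 n d ∈
          Ideal.span {Ideal.Quotient.mk (Ideal.span {(X : Polynomial F4) ^ n - 1}) h}) ↔
        ∀ a b : Polynomial (ZMod 2),
          mk2 n a + algebraMap F4 _ η * mk2 n b ∈
            Ideal.span {Ideal.Quotient.mk (Ideal.span {(X : Polynomial F4) ^ n - 1})
              (g.map (algebraMap (ZMod 2) F4) * h)} →
          mk2 n (a * d.comp (X ^ (n - 1))) = mk2 n (b * c.comp (X ^ (n - 1))) := by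
  intro c d
  have hcard : n = Nat.card F4 ^ m + 1 := by rw [hn, GaloisField.card 2 2 two_ne_zero]; norm_num
  rw [← coe_frobeniusAlgHom_zmod] at hfact
  simpa only [mk_ofPair_eq_mk2_add_mul_mk2] using!
    stmt_13_general _ (frobeniusAlgHom_zmod_two_apply_ne hη) hm.ne' hcard hfact c d
end

section
/- Let m be a positive integer, n = 4^m + 1, and let s ∈ F_2[X] be a divisor of X^n − 1. If a ∈ F_2[X] satisfies a(X)² ≡ a(X) + 1 (mod s(X)), then a(X^{n−1}) ≡ a(X) (mod s(X)), where a(X^{n−1}) denotes the polynomial composition of a with X^{n−1}. -/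
open Polynomial

/-!
The substitution `X ↦ X ^ q` is the Frobenius on `𝔽_q[X]`, so it descends to `𝔽_q[X] / (s)` and its
iterates are the powers `a ↦ a ^ q ^ k`. If Frobenius translates `a` by a constant modulo `s`, then
its `k`-th iterate translates `a` by `k` times that constant, which vanishes as soon as the
characteristic divides `k`.
-/

theorem iterate_eq_add_nsmul {M F : Type*} [AddMonoid M] [FunLike F M M] [AddHomClass F M M]
    (σ : F) {x c : M} (hx : σ x = x + c) (hc : σ c = c) (k : ℕ) : σ^[k] x = x + k • c := by
  induction k with
  | zero => simp
  | succ k ih =>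
    rw [Function.iterate_succ_apply, hx, iterate_map_add, ih, Function.iterate_fixed hc, succ_nsmul,
      add_assoc]

section FiniteField

variable {K : Type*} [Field K] [Fintype K]

theorem comp_X_pow_card_pow (f : K[X]) (k : ℕ) :
    f.comp (X ^ Fintype.card K ^ k) = f ^ Fintype.card K ^ k := by
  rw [← expand_eq_comp_X_pow, expand_pow, _root_.funext FiniteField.expand_card, pow_iterate]

theorem pow_card_pow_eq_add_nsmul {A : Type*} [CommRing A] [Algebra K A] {c : K} {x : A}
    (hx : x ^ Fintype.card K = x + algebraMap K A c) (k : ℕ) :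
    x ^ Fintype.card K ^ k = x + k • algebraMap K A c := by
  rw [← iterate_eq_add_nsmul (FiniteField.frobeniusAlgHom K A) hx (AlgHom.commutes _ c) k]
  simp only [FiniteField.coe_frobeniusAlgHom, pow_iterate]

theorem pow_card_pow_char_mul_eq_self (p : ℕ) [CharP K p] {A : Type*} [CommRing A] [Algebra K A]
    {c : K} {x : A} (hx : x ^ Fintype.card K = x + algebraMap K A c) (m : ℕ) :
    x ^ Fintype.card K ^ (p * m) = x := by
  have translation_eq_zero : (p * m) • c = 0 := by
    rw [nsmul_eq_mul, Nat.cast_mul, CharP.cast_eq_zero, zero_mul, zero_mul]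
  rw [pow_card_pow_eq_add_nsmul hx, ← map_nsmul, translation_eq_zero, map_zero, add_zero]

theorem stmt_16_general (p : ℕ) [CharP K p] (m : ℕ) (c : K) (s a : K[X])
    (ha : s ∣ a ^ Fintype.card K - (a + C c)) :
    s ∣ a.comp (X ^ Fintype.card K ^ (p * m)) - a := by
  rw [← AdjoinRoot.mk_eq_mk, map_pow, map_add, AdjoinRoot.mk_C] at ha
  rw [← AdjoinRoot.mk_eq_mk, comp_X_pow_card_pow, map_pow]
  exact pow_card_pow_char_mul_eq_self p ha m

end FiniteField

/-- Let `n = 4^m + 1` for a positive integer `m` and let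
`s ∈ F₂[X]` divide `X^n − 1`.  If `a ∈ F₂[X]` satisfies `a² ≡ a + 1 (mod s)`,
then `a(X^{n−1}) ≡ a(X) (mod s)`, where `a(X^{n−1})` is the composition of `a`
with `X^{n−1}`. -/
theorem stmt_16 (m n : ℕ) (hm : 0 < m) (hn : n = 4 ^ m + 1)
    (s a : Polynomial (ZMod 2)) (hs : s ∣ X ^ n - 1)
    (ha : s ∣ a ^ 2 - (a + 1)) :
    s ∣ a.comp (X ^ (n - 1)) - a := by
  simpa [hn, ZMod.card, pow_mul] using stmt_16_general 2 m 1 s a (by simpa using ha)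
end

section
/- Let m be a positive integer and n = 4^m + 1. Let g ∈ F_2[X] be a monic divisor of X^n − 1 such that X + 1 divides g. Then there exists a polynomial a ∈ F_2[X] such that g divides a and (X^n − 1)/g divides a² + a + 1 in F_2[X]. -/
open Polynomial

/-!
Write `q = 2 ^ k`, where `n ∣ q + 1` (here `k = 2 * m`), and `h = (X ^ n - 1) / g`. As `X ^ n - 1`
is separable, `h` is coprime to `g` and hence to `X + 1`, so modulo `h` the element `X + 1` has an
inverse `y`, which may be chosen divisible by `g`. Then `y ^ q` is an inverse of
`X ^ q + 1 = X⁻¹ + 1`, and `(X + 1)⁻¹ + (X⁻¹ + 1)⁻¹ = 1`, so `y ^ q + y = 1` modulo `h`. The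
Artin–Schreier sum `a = ∑ i < k, y ^ 2 ^ i` is divisible by `g` and satisfies
`a ^ 2 + a = y ^ q + y`.
-/

theorem sum_pow_expChar_pow_pow_sub_self {R : Type*} [CommRing R] (p : ℕ) [ExpChar R p]
    (y : R) (k : ℕ) :
    (∑ i ∈ Finset.range k, y ^ p ^ i) ^ p - ∑ i ∈ Finset.range k, y ^ p ^ i = y ^ p ^ k - y := by
  simp only [sum_pow_char, ← pow_mul, ← pow_succ, ← Finset.sum_sub_distrib]
  simpa using Finset.sum_range_sub (fun i ↦ y ^ p ^ i) k

/-- With `t = x⁻¹` modulo `h`, this says `(x + 1)⁻¹ + (x⁻¹ + 1)⁻¹ = 1`. -/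
theorem dvd_add_sub_one_of_inverses {R : Type*} [CommRing R] {h x t y z : R}
    (hxt : h ∣ x * t - 1) (hy : h ∣ (x + 1) * y - 1) (hz : h ∣ (t + 1) * z - 1) :
    h ∣ z + y - 1 := by
  have mul_z_congr_x : h ∣ (x + 1) * z - x := by
    convert (hz.mul_left x).sub (hxt.mul_right z) using 1
    ring
  convert ((mul_z_congr_x.mul_left y).sub (hy.mul_right z)).add hy using 1
  ring

theorem dvd_pow_expChar_pow_add_sub_one {R : Type*} [CommRing R] (p : ℕ) [ExpChar R p]
    {h x y : R} {k : ℕ} (hx : h ∣ x ^ (p ^ k + 1) - 1) (hy : h ∣ (x + 1) * y - 1) :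
    h ∣ y ^ p ^ k + y - 1 := by
  have frobenius : ((x + 1) * y - 1) ^ p ^ k = (x ^ p ^ k + 1) * y ^ p ^ k - 1 := by
    rw [sub_pow_expChar_pow, mul_pow, add_pow_expChar_pow, one_pow]
  have inverse_pow : h ∣ (x ^ p ^ k + 1) * y ^ p ^ k - 1 :=
    frobenius ▸ dvd_pow hy (expChar_pow_pos R p k).ne'
  exact dvd_add_sub_one_of_inverses (by rwa [← pow_succ']) hy inverse_pow

section CharTwo

variable {R : Type*} [CommRing R] [CharP R 2]

theorem exists_dvd_and_dvd_sq_add_self_add_one {g h x : R} {k : ℕ}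
    (hx : h ∣ x ^ (2 ^ k + 1) - 1) (hxh : IsCoprime (x + 1) h) (hgh : IsCoprime g h) :
    ∃ a, g ∣ a ∧ h ∣ a ^ 2 + a + 1 := by
  obtain ⟨u, v, huv⟩ := hxh.mul_left hgh
  have inverse : h ∣ (x + 1) * (u * g) - 1 := ⟨-v, by linear_combination huv⟩
  let a := ∑ i ∈ Finset.range k, (u * g) ^ 2 ^ i
  have artinSchreier : a ^ 2 - a = (u * g) ^ 2 ^ k - u * g :=
    sum_pow_expChar_pow_pow_sub_self 2 (u * g) k
  refine ⟨a, Finset.dvd_sum fun i _ ↦ dvd_pow (dvd_mul_left g u) (by positivity), ?_⟩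
  convert dvd_pow_expChar_pow_add_sub_one 2 hx inverse using 1
  linear_combination artinSchreier + (a - u * g + 1) * CharTwo.two_eq_zero (R := R)

theorem separable_X_pow_sub_one_of_odd {n : ℕ} (hn : Odd n) : (X ^ n - 1 : R[X]).Separable := by
  have natCast_eq_one : (n : R) = 1 := by
    rw [CharTwo.natCast_eq_ite, if_neg (Nat.not_even_iff_odd.mpr hn)]
  simpa using separable_X_pow_sub_C_unit (1 : Rˣ) (natCast_eq_one ▸ isUnit_one)

theorem stmt_17_general {k n : ℕ} (hk : k ≠ 0) (hn : n ∣ 2 ^ k + 1) {g : R[X]} (hg : g.Monic)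
    (hdvd : g ∣ X ^ n - 1) (hX1 : X + 1 ∣ g) :
    ∃ a : R[X], g ∣ a ∧ (X ^ n - 1) /ₘ g ∣ a ^ 2 + a + 1 := by
  obtain ⟨h, hgh⟩ := hdvd
  have odd_n : Odd n := Odd.of_dvd_nat ((even_two.pow_of_ne_zero hk).add_one) hn
  have coprime : IsCoprime g h := (hgh ▸ separable_X_pow_sub_one_of_odd odd_n).isCoprime
  have h_dvd : h ∣ X ^ (2 ^ k + 1) - 1 :=
    (hgh ▸ dvd_mul_left h g).trans (dvd_pow_sub_one_of_dvd hn)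
  rw [hgh, mul_divByMonic_cancel_left h hg]
  exact exists_dvd_and_dvd_sq_add_self_add_one h_dvd (coprime.of_isCoprime_of_dvd_left hX1) coprime

end CharTwo

/-- Let `n = 4^m + 1` for a positive integer `m` and let
`g ∈ F₂[X]` be a monic divisor of `X^n − 1` with `X + 1 ∣ g`.  Then there is a
polynomial `a ∈ F₂[X]` such that `g ∣ a` and `(X^n − 1)/g ∣ a² + a + 1`. -/
theorem stmt_17 (m n : ℕ) (hm : 0 < m) (hn : n = 4 ^ m + 1)
    (g : Polynomial (ZMod 2)) (hg : g.Monic) (hdvd : g ∣ X ^ n - 1)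
    (hX1 : (X + 1 : Polynomial (ZMod 2)) ∣ g) :
    ∃ a : Polynomial (ZMod 2), g ∣ a ∧ ((X ^ n - 1) /ₘ g) ∣ (a ^ 2 + a + 1) := by
  have n_dvd : n ∣ 2 ^ (2 * m) + 1 := by norm_num [hn, pow_mul]
  exact stmt_17_general (by positivity) n_dvd hg hdvd hX1
end

section
/- Let p be an odd prime, n a positive integer, and ζ = e^{2πi/p}. Let L and M be n×n matrices over F_p such that LᵀM is symmetric, the map φ(a) = (La, Ma) from F_p^n to F_p^n × F_p^n is injective, and the image S of φ is totally isotropic with respect to the symplectic inner product. Define the operator P = Σ_{a ∈ F_p^n} ζ^{2^{−1}·aᵀLᵀMa} U_{La} V_{Ma} on the space of functions F_p^n → ℂ, where 2^{−1} is the inverse of 2 in F_p. Then 𝒩 ∘ P ∘ 𝒩⁻¹ = P if and only if S is separately cyclic. -/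
open Matrix

/-- `ζ^c` for `c ∈ F_p`, where `ζ = e^{2πi/p}`; well defined via the canonical lift. -/
noncomputable def zetaPow (p : ℕ) (c : ZMod p) : ℂ :=
  Complex.exp (2 * Real.pi * Complex.I * (c.val : ℂ) / (p : ℂ))

/-- The inverse (left) cyclic shift `N⁻¹` on `F_p^n`. -/
def shiftNinv {p n : ℕ} [NeZero n] (u : Fin n → ZMod p) : Fin n → ZMod p :=
  fun i => u (i + 1)

/-- The Weyl operator `U_a` on functions `F_p^n → ℂ`: `(U_a f)(x) = f(x − a)`. -/
def weylU {p n : ℕ} (a : Fin n → ZMod p) (f : (Fin n → ZMod p) → ℂ) :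
    (Fin n → ZMod p) → ℂ :=
  fun x => f (x - a)

/-- The Weyl operator `V_b` on functions `F_p^n → ℂ`: `(V_b f)(x) = ζ^{bᵀx} f(x)`. -/
noncomputable def weylV {p n : ℕ} (b : Fin n → ZMod p) (f : (Fin n → ZMod p) → ℂ) :
    (Fin n → ZMod p) → ℂ :=
  fun x => zetaPow p (∑ i, b i * x i) * f x

/-- The shift operator `𝒩` on functions `F_p^n → ℂ`: `(𝒩 f)(x) = f(N⁻¹ x)`. -/
def opN {p n : ℕ} [NeZero n] (f : (Fin n → ZMod p) → ℂ) : (Fin n → ZMod p) → ℂ :=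
  fun x => f (shiftNinv x)

/-- The inverse `𝒩⁻¹` of the shift operator: `(𝒩⁻¹ f)(x) = f(N x)`. -/
def opNinv {p n : ℕ} [NeZero n] (f : (Fin n → ZMod p) → ℂ) : (Fin n → ZMod p) → ℂ :=
  fun x => f (shiftN x)

/-- The image `S` of the map `φ(a) = (La, Ma)`. -/
def phiRange (p n : ℕ) (L M : Matrix (Fin n) (Fin n) (ZMod p)) :
    Set ((Fin n → ZMod p) × (Fin n → ZMod p)) :=
  Set.range fun a : Fin n → ZMod p => (L.mulVec a, M.mulVec a)

/-- The operator `P = Σ_a ζ^{2⁻¹·aᵀLᵀMa} U_{La} V_{Ma}` on functions `F_p^n → ℂ`. -/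
noncomputable def stabProj (p n : ℕ) [NeZero p]
    (L M : Matrix (Fin n) (Fin n) (ZMod p)) :
    ((Fin n → ZMod p) → ℂ) → ((Fin n → ZMod p) → ℂ) :=
  fun f => ∑ a : Fin n → ZMod p,
    zetaPow p ((2⁻¹ : ZMod p) * (a ⬝ᵥ (Lᵀ * M).mulVec a)) •
      weylU (L.mulVec a) (weylV (M.mulVec a) f)

/-!
The Weyl operators `W_{(a,b)} = U_a V_b` are linearly independent, and conjugation by `𝒩` permutes
them: `𝒩 W_{(a,b)} 𝒩⁻¹ = W_{(Na,Nb)}`. Hence an operator `∑ g(t) W_t` commutes with `𝒩` exactly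
when its coefficient function `g` is constant along the orbits of `(a,b) ↦ (Na,Nb)`.

Since `aᵀLᵀMa = (La)ᵀ(Ma)`, the phase of a term of `P` depends only on `t = φ(a)`, so the
coefficient of `W_t` in `P` is the shift-invariant, nonzero number `ζ^{2⁻¹·t₁ᵀt₂}` times the size
of the fibre `φ⁻¹(t)`. All nonempty fibres of the additive map `φ` are equally large, so the
coefficients are shift-invariant exactly when the image of `φ` is.
-/

/-- The phase space `(ℤ/p)^n × (ℤ/p)^n`, whose points `(a, b)`
label the Weyl operators `U_a V_b`. -/
abbrev PhaseSpace (p n : ℕ) : Type := (Fin n → ZMod p) × (Fin n → ZMod p)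

section Characters

variable {p : ℕ} [NeZero p] {ι : Type*} [Fintype ι]

theorem zetaPow_eq_stdAddChar (c : ZMod p) : zetaPow p c = ZMod.stdAddChar c := by
  rw [ZMod.stdAddChar_apply, ZMod.toCircle_apply, zetaPow]

/-- The additive character `x ↦ ζ^{bᵀx}` of `(ℤ/p)^ι`. -/
noncomputable def dotChar (b : ι → ZMod p) : AddChar (ι → ZMod p) ℂ :=
  ZMod.stdAddChar.compAddMonoidHom (dotProductBilin (ZMod p) (ZMod p) b).toAddMonoidHom

theorem dotChar_apply (b x : ι → ZMod p) : dotChar b x = zetaPow p (b ⬝ᵥ x) :=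
  (zetaPow_eq_stdAddChar _).symm

theorem dotChar_injective :
    Function.Injective (dotChar : (ι → ZMod p) → AddChar (ι → ZMod p) ℂ) := by
  classical
  intro b b' h
  funext i
  have h_single := DFunLike.congr_fun h (Pi.single i 1)
  simp only [dotChar_apply, dotProduct_single_one, zetaPow_eq_stdAddChar] at h_single
  exact ZMod.injective_stdAddChar h_single

theorem linearIndependent_dotChar :
    LinearIndependent ℂ fun b : ι → ZMod p => ⇑(dotChar b) :=
  (AddChar.linearIndependent (ι → ZMod p) ℂ).comp dotChar dotChar_injective

end Characters

section WeylOperators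

variable {p n : ℕ}

/-- The Weyl operator `U_a V_b` attached to the point `(a, b)` of phase space, as a linear map. -/
noncomputable def weylOp (t : PhaseSpace p n) :
    ((Fin n → ZMod p) → ℂ) →ₗ[ℂ] ((Fin n → ZMod p) → ℂ) where
  toFun f := weylU t.1 (weylV t.2 f)
  map_add' _ _ := funext fun _ => mul_add _ _ _
  map_smul' _ _ := funext fun _ => mul_left_comm _ _ _

theorem weylOp_apply (t : PhaseSpace p n) (f : (Fin n → ZMod p) → ℂ) (x : Fin n → ZMod p) :
    weylOp t f x = zetaPow p (t.2 ⬝ᵥ (x - t.1)) * f (x - t.1) :=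
  rfl

variable [NeZero p]

theorem weylOp_single_add (t : PhaseSpace p n) (y a : Fin n → ZMod p) :
    weylOp t (Pi.single y 1) (y + a) = if a = t.1 then dotChar t.2 y else 0 := by
  rw [weylOp_apply, Pi.single_apply, dotChar_apply]
  rcases eq_or_ne a t.1 with rfl | ha
  · simp
  · have h_ne : y + a - t.1 ≠ y := by rwa [add_sub_assoc, Ne, add_eq_left, sub_eq_zero]
    rw [if_neg h_ne, if_neg ha, mul_zero]

theorem linearIndependent_weylOp :
    LinearIndependent ℂ (weylOp : PhaseSpace p n → _) := by
  rw [Fintype.linearIndependent_iff]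
  rintro g hg ⟨a, b⟩
  -- The matrix entries in position `(y + a, y)` only see the operators with first label `a`.
  have h_slice : ∑ b', g (a, b') • ⇑(dotChar b') = 0 := by
    funext y
    have h_entry := congrFun (LinearMap.congr_fun hg (Pi.single y 1)) (y + a)
    simpa [weylOp_single_add, Fintype.sum_prod_type_right] using h_entry
  exact Fintype.linearIndependent_iff.mp linearIndependent_dotChar _ h_slice b

/-- The operator `∑ g(t) W_t` with coefficient function `g` on phase space. -/
noncomputable def weylSum (g : PhaseSpace p n → ℂ) :
    ((Fin n → ZMod p) → ℂ) →ₗ[ℂ] ((Fin n → ZMod p) → ℂ) :=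
  Fintype.linearCombination ℂ weylOp g

theorem weylSum_apply (g : PhaseSpace p n → ℂ) (f : (Fin n → ZMod p) → ℂ)
    (x : Fin n → ZMod p) : weylSum g f x = ∑ t, g t * weylOp t f x := by
  simp [weylSum, Fintype.linearCombination_apply]

theorem weylSum_injective : Function.Injective (weylSum : (PhaseSpace p n → ℂ) → _) :=
  linearIndependent_weylOp.fintypeLinearCombination_injective

end WeylOperators

section Shift

variable {p n : ℕ} [NeZero n]

/-- The cyclic shift `N` as a permutation of `(ℤ/p)^n`. -/
def shiftPerm : Equiv.Perm (Fin n → ZMod p) where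
  toFun := shiftN
  invFun := shiftNinv
  left_inv u := funext fun i => congrArg u (add_sub_cancel_right i 1)
  right_inv u := funext fun i => congrArg u (sub_add_cancel i 1)

/-- The simultaneous shift `(a, b) ↦ (Na, Nb)` as a permutation of phase space. -/
def phaseShift : Equiv.Perm (PhaseSpace p n) :=
  shiftPerm.prodCongr shiftPerm

theorem shiftN_dotProduct_shiftN (u v : Fin n → ZMod p) : shiftN u ⬝ᵥ shiftN v = u ⬝ᵥ v :=
  Equiv.sum_comp (Equiv.subRight (1 : Fin n)) fun i => u i * v i

theorem opN_weylOp_opNinv (t : PhaseSpace p n) (f : (Fin n → ZMod p) → ℂ) :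
    opN (weylOp t (opNinv f)) = weylOp (phaseShift t) f := by
  funext x
  have h_shift : shiftN (shiftNinv x - t.1) = x - shiftN t.1 :=
    congrArg (· - shiftN t.1) (shiftPerm.apply_symm_apply x)
  calc opN (weylOp t (opNinv f)) x
      = zetaPow p (t.2 ⬝ᵥ (shiftNinv x - t.1)) * f (shiftN (shiftNinv x - t.1)) := rfl
    _ = zetaPow p (shiftN t.2 ⬝ᵥ (x - shiftN t.1)) * f (x - shiftN t.1) := by
      rw [← shiftN_dotProduct_shiftN, h_shift]

theorem opN_comp_weylSum_comp_opNinv [NeZero p] (g : PhaseSpace p n → ℂ) :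
    opN ∘ weylSum g ∘ opNinv = weylSum (g ∘ phaseShift.symm) := by
  funext f x
  calc opN (weylSum g (opNinv f)) x
      = ∑ t, g t * opN (weylOp t (opNinv f)) x := weylSum_apply g _ _
    _ = ∑ t, g (phaseShift.symm (phaseShift t)) * weylOp (phaseShift t) f x := by
      simp only [opN_weylOp_opNinv, Equiv.symm_apply_apply]
    _ = ∑ t, g (phaseShift.symm t) * weylOp t f x :=
      Equiv.sum_comp phaseShift fun t => g (phaseShift.symm t) * weylOp t f x
    _ = weylSum (g ∘ phaseShift.symm) f x := (weylSum_apply _ f x).symm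

theorem opN_comp_weylSum_comp_opNinv_eq_self_iff [NeZero p] (g : PhaseSpace p n → ℂ) :
    opN ∘ weylSum g ∘ opNinv = weylSum g ↔ ∀ t, g (phaseShift t) = g t := by
  rw [opN_comp_weylSum_comp_opNinv, DFunLike.coe_injective.eq_iff, weylSum_injective.eq_iff,
    Equiv.comp_symm_eq, eq_comm, funext_iff]
  rfl

end Shift

open scoped Finset in
theorem card_fiber_perm_eq_iff_mapsTo_range {G H : Type*} [AddGroup G] [Fintype G] [AddMonoid H]
    [DecidableEq H] (φ : G →+ H) (σ : Equiv.Perm H) :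
    (∀ t, #{x | φ x = σ t} = #{x | φ x = t}) ↔
      Set.MapsTo σ (Set.range φ) (Set.range φ) := by
  have h_mem (t : H) : t ∈ Set.range φ ↔ #{x | φ x = t} ≠ 0 := by
    simp [Finset.filter_eq_empty_iff]
  constructor
  · intro h_card t ht
    rwa [h_mem, h_card, ← h_mem]
  · intro h_maps t
    by_cases ht : t ∈ Set.range φ
    · exact AddMonoidHom.card_fiber_eq_of_mem_range φ (h_maps ht) ht
    · have h_shift : σ t ∉ Set.range φ := fun h =>
        ht (by simpa using Equiv.Perm.perm_symm_mapsTo_of_mapsTo σ h_maps h)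
      rw [h_mem, not_not] at ht h_shift
      rw [ht, h_shift]

section QuadraticPhase

variable {p n : ℕ} {ι : Type*} [Fintype ι]

/-- The map `φ(a) = (La, Ma)` as an additive homomorphism. -/
def phaseMap (L M : Matrix (Fin n) ι (ZMod p)) : (ι → ZMod p) →+ PhaseSpace p n :=
  (L.mulVecLin.prod M.mulVecLin).toAddMonoidHom

variable [NeZero p] [DecidableEq ι]

/-- The operator `∑_a ζ^{c·aᵀLᵀMa} U_{La} V_{Ma}`. The stabiliser projection `stabProj` is the
case of square matrices and `c = 2⁻¹`. -/
noncomputable def quadraticWeylSum (c : ZMod p) (L M : Matrix (Fin n) ι (ZMod p)) :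
    ((Fin n → ZMod p) → ℂ) → ((Fin n → ZMod p) → ℂ) :=
  fun f => ∑ a : ι → ZMod p,
    zetaPow p (c * (a ⬝ᵥ (Lᵀ * M).mulVec a)) • weylU (L.mulVec a) (weylV (M.mulVec a) f)

open scoped Finset in
theorem quadraticWeylSum_eq_weylSum (c : ZMod p) (L M : Matrix (Fin n) ι (ZMod p)) :
    quadraticWeylSum c L M =
      weylSum fun t => #{a | phaseMap L M a = t} * zetaPow p (c * (t.1 ⬝ᵥ t.2)) := by
  funext f
  have h_phase (a : ι → ZMod p) : a ⬝ᵥ (Lᵀ * M).mulVec a = L.mulVec a ⬝ᵥ M.mulVec a := by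
    rw [← mulVec_mulVec, dotProduct_mulVec, vecMul_transpose]
  calc quadraticWeylSum c L M f
      = ∑ a, zetaPow p (c * ((phaseMap L M a).1 ⬝ᵥ (phaseMap L M a).2)) •
          weylOp (phaseMap L M a) f := by
        simp only [quadraticWeylSum, h_phase]
        rfl
    _ = ∑ t, ∑ a with phaseMap L M a = t, zetaPow p (c * (t.1 ⬝ᵥ t.2)) • weylOp t f :=
      (Finset.sum_fiberwise' _ _ fun t : PhaseSpace p n =>
        zetaPow p (c * (t.1 ⬝ᵥ t.2)) • weylOp t f).symm
    _ = weylSum (fun t => #{a | phaseMap L M a = t} * zetaPow p (c * (t.1 ⬝ᵥ t.2))) f := by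
      simp [weylSum, Fintype.linearCombination_apply, mul_smul, Nat.cast_smul_eq_nsmul]

theorem stmt_18_general [NeZero n] (c : ZMod p) (L M : Matrix (Fin n) ι (ZMod p)) :
    opN ∘ quadraticWeylSum c L M ∘ opNinv = quadraticWeylSum c L M ↔
      ∀ ab ∈ Set.range (phaseMap L M), (shiftN ab.1, shiftN ab.2) ∈ Set.range (phaseMap L M) := by
  have h_phase (t : PhaseSpace p n) :
      zetaPow p (c * ((phaseShift t).1 ⬝ᵥ (phaseShift t).2)) = zetaPow p (c * (t.1 ⬝ᵥ t.2)) :=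
    congrArg (fun d => zetaPow p (c * d)) (shiftN_dotProduct_shiftN t.1 t.2)
  have h_ne (d : ZMod p) : zetaPow p d ≠ 0 := Complex.exp_ne_zero _
  rw [quadraticWeylSum_eq_weylSum, opN_comp_weylSum_comp_opNinv_eq_self_iff]
  simp only [h_phase, mul_left_inj' (h_ne _), Nat.cast_inj]
  exact card_fiber_perm_eq_iff_mapsTo_range (phaseMap L M) phaseShift

end QuadraticPhase

/-- Let `p` be an odd prime, `n` a positive integer, and `L, M`
`n×n` matrices over `F_p` with `LᵀM` symmetric such that `φ(a) = (La, Ma)` is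
injective and its image `S` is totally isotropic.  With
`P = Σ_a ζ^{2⁻¹·aᵀLᵀMa} U_{La} V_{Ma}`, we have `𝒩 ∘ P ∘ 𝒩⁻¹ = P` iff `S` is
separately cyclic. -/
theorem stmt_18 (p n : ℕ) [Fact p.Prime] (hodd : p ≠ 2) [NeZero n]
    (L M : Matrix (Fin n) (Fin n) (ZMod p))
    (hsym : (Lᵀ * M).IsSymm)
    (hinj : Function.Injective fun a : Fin n → ZMod p => (L.mulVec a, M.mulVec a))
    (hiso : ∀ u ∈ phiRange p n L M, ∀ v ∈ phiRange p n L M, sympInner u v = 0) :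
    opN ∘ stabProj p n L M ∘ opNinv = stabProj p n L M ↔
      ∀ ab ∈ phiRange p n L M, (shiftN ab.1, shiftN ab.2) ∈ phiRange p n L M :=
  stmt_18_general 2⁻¹ L M
end
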